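/- arXiv:1502.04178 — 2 statements merged into one kernel-verified Lean document; each statement's English description precedes it below -/
import Mathlib

section
/- Let f be C²-smooth on an open neighbourhood of S^{n-1} whose restriction to S^{n-1} is orthogonal to all linear functions. Then ∫ |∇f|² dσ_{n-1} ≤ (c_n/(n−1)) ∫ ‖f''‖²_HS dσ_{n-1} with c_n = 1 + (1 + 1/√(n−1))²; in particular, ∫ |∇f|² dσ_{n-1} ≤ (5/(n−1)) ∫ ‖f''‖²_HS dσ_{n-1}. Here ∇f and f'' are the Euclidean gradient and Hessian. -/
open MeasureTheory Metric Filter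
open scoped RealInnerProductSpace ENNReal NNReal

noncomputable section

namespace SecondOrderConc

/-- Euclidean space ℝⁿ. -/
abbrev E (n : ℕ) : Type := EuclideanSpace ℝ (Fin n)

/-- The uniform (normalized rotation-invariant) probability measure `σ_{n-1}`
on the unit sphere `S^{n-1}`, viewed as a measure on the ambient space ℝⁿ. -/
def sphMeasure (n : ℕ) : Measure (E n) :=
  ((((volume : Measure (E n)).toSphere).map Subtype.val) Set.univ)⁻¹ •
    (((volume : Measure (E n)).toSphere).map Subtype.val)

variable {n : ℕ}

/-- Euclidean Hessian of `f` at `x`, as a continuous linear operator on ℝⁿ. -/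
def hess (f : E n → ℝ) (x : E n) : E n →L[ℝ] E n :=
  fderiv ℝ (gradient f) x

/-- Squared Hilbert–Schmidt norm of an operator on ℝⁿ. -/
def hsNormSq (A : E n →L[ℝ] E n) : ℝ :=
  ∑ i : Fin n, ‖A (EuclideanSpace.single i 1)‖ ^ 2

/-- Orthogonal projection of ℝⁿ onto `θ^⊥` (for a unit vector `θ`). -/
def projPerp (θ : E n) : E n →L[ℝ] E n :=
  ContinuousLinearMap.id ℝ (E n) - (innerSL ℝ θ).smulRight θ

/-- Spherical gradient `∇_S f(θ) = ∇f(θ) − ⟨∇f(θ),θ⟩θ`. -/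
def sgrad (f : E n → ℝ) (θ : E n) : E n :=
  gradient f θ - ⟪gradient f θ, θ⟫ • θ

/-- Spherical Hessian `f''_S(θ) = P_{θ^⊥} (f''(θ) − ⟨∇f(θ),θ⟩ I_n) P_{θ^⊥}`. -/
def sHess (f : E n → ℝ) (θ : E n) : E n →L[ℝ] E n :=
  (projPerp θ).comp
    ((hess f θ - ⟪gradient f θ, θ⟫ • ContinuousLinearMap.id ℝ (E n)).comp (projPerp θ))

/-- Spherical Laplacian `Δ_S f(θ) = Tr f''_S(θ)`. -/
def sLap (f : E n → ℝ) (θ : E n) : ℝ :=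
  LinearMap.trace ℝ (E n) (sHess f θ).toLinearMap

/-- Euclidean Laplacian `Δ f = Tr f''`. -/
def eLap (f : E n → ℝ) (x : E n) : ℝ :=
  LinearMap.trace ℝ (E n) (hess f x).toLinearMap

/-- 0-homogeneous extension to `ℝⁿ \ {0}` of (the restriction to the sphere of) `g`. -/
def ext0 (g : E n → ℝ) : E n → ℝ := fun x => g (‖x‖⁻¹ • x)

/-!
Integrals over the unit sphere of `V` are integrals over the orthogonal group `O(V)` with its Haar
measure, and there the law of `(u e, u w)` is the same for all orthonormal pairs `(e, w)`. So the
mean square increment of a map `g` between two points at angle `φ` is at most `φ ^ 2` times its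
mean square derivative in a unit tangent direction. If `g` is odd, comparing orthogonal points
controls its mean square, since the cross term vanishes under `e ↦ -e`. If `g` is even, two points
are always at angle at most `π / 2` up to sign. Together this gives a Poincaré inequality with
constant `π ^ 2 / 8` for maps into a Hilbert space.

Applied to `∇f` with `d = dim V`, it bounds the variance of `∇f` by the Hessian, with a gain of
`d - 1` because the `d - 1` tangential columns of the Hessian have equal mean squares. The mean `m`
of `∇f` is not controlled by the Hessian alone. Integrating by parts along great circles, the
orthogonality of `f` to linear functions gives `|m| ^ 2 = ∫ ⟪m, θ⟫ ⟪∇f θ, θ⟫`; as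
`∫ ⟪m, θ⟫ ^ 2 = |m| ^ 2 / d`, replacing `∇f` by `∇f - m` on the right leaves `(1 - 1 / d) |m| ^ 2`,
and Cauchy–Schwarz yields `(d - 1) ^ 2 |m| ^ 2 ≤ d Var(∇f)`.
-/

section OrthogonalGroup

variable (V : Type*) [NormedAddCommGroup V] [InnerProductSpace ℝ V] [FiniteDimensional ℝ V]

/-- The orthogonal group of a Euclidean space `V`, acting on `V` by evaluation. -/
abbrev OrthGroup : Type _ := unitary (V →L[ℝ] V)

variable {V}

@[simp]
lemma norm_orth_smul (u : OrthGroup V) (x : V) : ‖u • x‖ = ‖x‖ := Unitary.norm_map u x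

instance orthGroup_continuousSMul : ContinuousSMul (OrthGroup V) V :=
  ⟨(continuous_subtype_val.comp continuous_fst).clm_apply continuous_snd⟩

instance orthGroup_compactSpace : CompactSpace (OrthGroup V) := by
  refine isCompact_iff_compactSpace.mp <|
    (ProperSpace.isCompact_closedBall (0 : V →L[ℝ] V) 1).of_isClosed_subset isClosed_unitary
      fun u hu => mem_closedBall_zero_iff.mpr ?_
  refine ContinuousLinearMap.opNorm_le_bound _ zero_le_one fun x => ?_
  simpa using (norm_orth_smul (⟨u, hu⟩ : OrthGroup V) x).le

lemma exists_orth_smul_eq {ι : Type*} {v w : ι → V} (hv : Orthonormal ℝ v)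
    (hw : Orthonormal ℝ w) : ∃ u : OrthGroup V, ∀ i, u • v i = w i := by
  let b := Module.Basis.span hv.linearIndependent
  have hb : Orthonormal ℝ b := by
    refine ((Submodule.span ℝ (Set.range v)).subtypeₗᵢ.orthonormal_comp_iff).mp ?_
    simpa [b, Function.comp_def, Module.Basis.span_apply] using hv
  let L := (b.constr ℝ w).isometryOfOrthonormal hb
    (by simpa [Function.comp_def, Module.Basis.constr_basis] using hw)
  refine ⟨Unitary.linearIsometryEquiv.symm (L.extend.toLinearIsometryEquiv rfl), fun i => ?_⟩
  have hLb : L (b i) = w i := b.constr_basis ℝ w i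
  rw [← hLb, ← L.extend_apply]
  simp [b, Module.Basis.span_apply, Submonoid.smul_def]

variable (V) in
/-- The Haar probability measure on the orthogonal group. -/
def orthHaar : Measure (OrthGroup V) := Measure.haarMeasure ⊤

instance orthHaar_isHaarMeasure : (orthHaar V).IsHaarMeasure := by
  unfold orthHaar; infer_instance

instance orthHaar_isProbabilityMeasure : IsProbabilityMeasure (orthHaar V) :=
  ⟨Measure.haarMeasure_self (K₀ := (⊤ : TopologicalSpace.PositiveCompacts (OrthGroup V)))⟩

instance orthHaar_isMulRightInvariant : (orthHaar V).IsMulRightInvariant := by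
  refine ⟨fun u => ?_⟩
  have : IsProbabilityMeasure ((orthHaar V).map (· * u)) :=
    Measure.isProbabilityMeasure_map (measurable_mul_const u).aemeasurable
  exact Measure.isHaarMeasure_eq_of_isProbabilityMeasure _ _

end OrthogonalGroup

section Stationary

variable {X F : Type*} [TopologicalSpace X] [CompactSpace X] [MeasurableSpace X] [BorelSpace X]
  {μ : Measure X} [NormedAddCommGroup F]

lemma integrable_of_compactSpace [IsFiniteMeasureOnCompacts μ] {g : X → F} (hg : Continuous g) :
    Integrable g μ :=
  hg.integrable_of_hasCompactSupport (HasCompactSupport.of_compactSpace g)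

variable [T2Space X] [SecondCountableTopology X] [IsFiniteMeasure μ] [NormedSpace ℝ F]
  [CompleteSpace F]

lemma integral_intervalIntegral_of_stationary {h : X → ℝ → F} (hc : Continuous h.uncurry)
    (hs : ∀ t, ∫ x, h x t ∂μ = ∫ x, h x 0 ∂μ) :
    ∫ x, (∫ t in (0 : ℝ)..1, h x t) ∂μ = ∫ x, h x 0 ∂μ := by
  have hint : Integrable (fun p : ℝ × X => h p.2 p.1)
      ((volume.restrict (Set.uIoc (0 : ℝ) 1)).prod μ) := by
    rw [← Measure.restrict_univ (μ := μ), Measure.prod_restrict]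
    exact ((hc.comp continuous_swap).continuousOn.integrableOn_compact
      (isCompact_uIcc.prod isCompact_univ)).mono_set (Set.prod_mono_left Set.uIoc_subset_uIcc)
  rw [← intervalIntegral_integral_swap hint, intervalIntegral.integral_congr fun t _ => hs t]
  simp

variable {k k' : X → ℝ → F}

lemma integral_deriv_eq_zero_of_stationary (hk : ∀ x t, HasDerivAt (k x) (k' x t) t)
    (hkc : ∀ t, Continuous fun x => k x t) (hc : Continuous k'.uncurry)
    (hs : ∀ t, ∫ x, k x t ∂μ = ∫ x, k x 0 ∂μ) (hs' : ∀ t, ∫ x, k' x t ∂μ = ∫ x, k' x 0 ∂μ) :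
    ∫ x, k' x 0 ∂μ = 0 := by
  have ftc : ∀ x, ∫ t in (0 : ℝ)..1, k' x t = k x 1 - k x 0 := fun x =>
    intervalIntegral.integral_eq_sub_of_hasDerivAt (fun t _ => hk x t)
      ((hc.uncurry_left x).intervalIntegrable _ _)
  rw [← integral_intervalIntegral_of_stationary hc hs']
  simp_rw [ftc]
  rw [integral_sub (integrable_of_compactSpace (hkc 1)) (integrable_of_compactSpace (hkc 0)), hs,
    sub_self]

lemma norm_sub_sq_le_integral_norm_deriv_sq {c c' : ℝ → F} (hd : ∀ t, HasDerivAt c (c' t) t)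
    (hc : Continuous c') : ‖c 1 - c 0‖ ^ 2 ≤ ∫ t in (0 : ℝ)..1, ‖c' t‖ ^ 2 := by
  have hconv : ConvexOn ℝ Set.univ fun x : F => ‖x‖ ^ 2 :=
    (convexOn_norm convex_univ).pow (fun _ _ => norm_nonneg _) 2
  have : IsProbabilityMeasure (volume.restrict (Set.Ioc (0 : ℝ) 1)) := ⟨by simp⟩
  rw [← intervalIntegral.integral_eq_sub_of_hasDerivAt (fun t _ => hd t)
    (hc.intervalIntegrable _ _), intervalIntegral.integral_of_le zero_le_one,
    intervalIntegral.integral_of_le zero_le_one]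
  exact hconv.map_integral_le (by fun_prop) isClosed_univ (by simp)
    (hc.integrableOn_Ioc) ((hc.norm.pow 2).integrableOn_Ioc)

lemma integral_norm_sub_sq_le_of_stationary (hk : ∀ x t, HasDerivAt (k x) (k' x t) t)
    (hc : Continuous k'.uncurry)
    (hs : ∀ t, ∫ x, ‖k' x t‖ ^ 2 ∂μ = ∫ x, ‖k' x 0‖ ^ 2 ∂μ) :
    ∫ x, ‖k x 1 - k x 0‖ ^ 2 ∂μ ≤ ∫ x, ‖k' x 0‖ ^ 2 ∂μ := by
  have hc2 : Continuous (fun x t => ‖k' x t‖ ^ 2).uncurry := hc.norm.pow 2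
  rw [← integral_intervalIntegral_of_stationary hc2 hs]
  refine integral_mono_of_nonneg (ae_of_all _ fun _ => sq_nonneg _)
    (integrable_of_compactSpace ?_)
    (ae_of_all _ fun x => norm_sub_sq_le_integral_norm_deriv_sq (hk x) (hc.uncurry_left x))
  exact intervalIntegral.continuous_parametric_intervalIntegral_of_continuous' hc2 0 1

end Stationary

section Variance

variable {Ω F : Type*} [MeasurableSpace Ω] {μ : Measure Ω} [IsProbabilityMeasure μ]
  [NormedAddCommGroup F] [InnerProductSpace ℝ F] [CompleteSpace F] {G : Ω → F}

lemma integral_norm_sub_sq_eq_variance_add (hG : MemLp G 2 μ) (y : F) :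
    ∫ x, ‖G x - y‖ ^ 2 ∂μ = ∫ x, ‖G x - ∫ z, G z ∂μ‖ ^ 2 ∂μ + ‖(∫ z, G z ∂μ) - y‖ ^ 2 := by
  set m := ∫ z, G z ∂μ with hm
  have hGm : MemLp (fun x => G x - m) 2 μ := hG.sub (memLp_const m)
  have hi : Integrable (fun x => G x - m) μ := hGm.integrable one_le_two
  have hi2 : Integrable (fun x => ‖G x - m‖ ^ 2) μ := hGm.integrable_norm_pow two_ne_zero
  have h_center : ∫ x, G x - m ∂μ = 0 := by
    rw [integral_sub (hG.integrable one_le_two) (integrable_const m)]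
    simp [hm]
  have h_cross : ∫ x, ⟪m - y, G x - m⟫ ∂μ = 0 := by
    rw [integral_inner hi, h_center, inner_zero_right]
  have h_expand : ∀ x, ‖G x - y‖ ^ 2 = ‖G x - m‖ ^ 2 + 2 * ⟪m - y, G x - m⟫ + ‖m - y‖ ^ 2 :=
    fun x => by rw [← sub_add_sub_cancel (G x) m y, norm_add_sq_real, real_inner_comm]
  have hi_cross : Integrable (fun x => 2 * ⟪m - y, G x - m⟫) μ := (hi.const_inner _).const_mul 2
  have hi_sum : Integrable (fun x => ‖G x - m‖ ^ 2 + 2 * ⟪m - y, G x - m⟫) μ := hi2.add hi_cross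
  simp_rw [h_expand]
  rw [integral_add hi_sum (integrable_const _), integral_add hi2 hi_cross, integral_const_mul,
    h_cross]
  simp

lemma integral_integral_norm_sub_sq (hG : MemLp G 2 μ) :
    ∫ y, (∫ x, ‖G x - G y‖ ^ 2 ∂μ) ∂μ = 2 * ∫ x, ‖G x - ∫ z, G z ∂μ‖ ^ 2 ∂μ := by
  have hi : Integrable (fun x => ‖G x - ∫ z, G z ∂μ‖ ^ 2) μ :=
    (hG.sub (memLp_const _)).integrable_norm_pow two_ne_zero
  calc ∫ y, (∫ x, ‖G x - G y‖ ^ 2 ∂μ) ∂μ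
      = ∫ y, ((∫ x, ‖G x - ∫ z, G z ∂μ‖ ^ 2 ∂μ) + ‖G y - ∫ z, G z ∂μ‖ ^ 2) ∂μ := by
        congr! 2 with y
        rw [integral_norm_sub_sq_eq_variance_add hG, norm_sub_rev _ (G y)]
    _ = 2 * ∫ x, ‖G x - ∫ z, G z ∂μ‖ ^ 2 ∂μ := by
        rw [integral_add (integrable_const _) hi, integral_const, probReal_univ, one_smul, two_mul]

end Variance

section Frames

variable {V F : Type*} [NormedAddCommGroup V] [InnerProductSpace ℝ V] {e w e' w' : V}

lemma orthonormal_pair_iff : Orthonormal ℝ ![e, w] ↔ ‖e‖ = 1 ∧ ‖w‖ = 1 ∧ ⟪e, w⟫ = 0 := by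
  simp [orthonormal_vecCons_iff]
  tauto

lemma exists_orthonormal_pair (hV : 2 ≤ Module.finrank ℝ V) (he : ‖e‖ = 1) :
    ∃ w, Orthonormal ℝ ![e, w] := by
  have h_lt : Module.finrank ℝ (ℝ ∙ e) < Module.finrank ℝ V :=
    (finrank_span_singleton (norm_ne_zero_iff.mp (he ▸ one_ne_zero))).trans_lt hV
  have h_perp : (ℝ ∙ e)ᗮ ≠ ⊥ := fun h => by
    rw [Submodule.orthogonal_eq_bot_iff.mp h, finrank_top] at h_lt
    exact h_lt.false
  obtain ⟨z, hz, hz0⟩ := Submodule.exists_mem_ne_zero_of_ne_bot h_perp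
  refine ⟨‖z‖⁻¹ • z, orthonormal_pair_iff.mpr ⟨he, norm_smul_inv_norm hz0, ?_⟩⟩
  rw [inner_smul_right, Submodule.mem_orthogonal_singleton_iff_inner_right.mp hz, mul_zero]

variable [FiniteDimensional ℝ V] [NormedAddCommGroup F] [NormedSpace ℝ F]

lemma integral_orth_family {ι : Type*} {v w : ι → V} (hv : Orthonormal ℝ v)
    (hw : Orthonormal ℝ w) (Φ : (ι → V) → F) :
    ∫ u : OrthGroup V, Φ (fun i => u • v i) ∂orthHaar V
      = ∫ u, Φ (fun i => u • w i) ∂orthHaar V := by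
  obtain ⟨r, hr⟩ := exists_orth_smul_eq hv hw
  rw [← integral_mul_right_eq_self (fun u : OrthGroup V => Φ fun i => u • v i) r]
  simp_rw [mul_smul, hr]

lemma integral_orth_unit (he : ‖e‖ = 1) (he' : ‖e'‖ = 1) (φ : V → F) :
    ∫ u : OrthGroup V, φ (u • e) ∂orthHaar V = ∫ u, φ (u • e') ∂orthHaar V :=
  integral_orth_family (ι := Unit) (v := fun _ => e) (w := fun _ => e')
    (by simpa [orthonormal_iff_ite]) (by simpa [orthonormal_iff_ite]) fun v => φ (v ())

lemma integral_orth_pair (h : Orthonormal ℝ ![e, w]) (h' : Orthonormal ℝ ![e', w'])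
    (Φ : V → V → F) :
    ∫ u : OrthGroup V, Φ (u • e) (u • w) ∂orthHaar V = ∫ u, Φ (u • e') (u • w') ∂orthHaar V :=
  integral_orth_family h h' fun v => Φ (v 0) (v 1)

end Frames

section Arc

variable {V : Type*} [NormedAddCommGroup V] [InnerProductSpace ℝ V] {e w y : V}

/-- The great circle through `e` with initial velocity `w`, for orthonormal `e` and `w`. -/
def arc (e w : V) (t : ℝ) : V := Real.cos t • e + Real.sin t • w

@[simp]
lemma arc_zero : arc e w 0 = e := by simp [arc]

lemma arc_neg_neg (t : ℝ) : arc (-e) (-w) t = -arc e w t := by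
  simp only [arc, smul_neg, neg_add]

lemma orthonormal_arc (h : Orthonormal ℝ ![e, w]) (t : ℝ) :
    Orthonormal ℝ ![arc e w t, arc w (-e) t] := by
  obtain ⟨he, hw, hew⟩ := orthonormal_pair_iff.mp h
  have hwe : ⟪w, e⟫ = 0 := inner_eq_zero_symm.mp hew
  have h_inner (a b c d : ℝ) : ⟪a • e + b • w, c • e + d • w⟫ = a * c + b * d := by
    simp [inner_add_left, inner_add_right, inner_smul_left, inner_smul_right, hew, hwe, he, hw,
      mul_comm]
  have h_arc : arc w (-e) t = -Real.sin t • e + Real.cos t • w := by simp [arc, add_comm]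
  have h_sq := Real.cos_sq_add_sin_sq t
  simp_rw [orthonormal_pair_iff, norm_eq_sqrt_real_inner, Real.sqrt_eq_one, h_arc, arc, h_inner]
  exact ⟨by linarith, by linarith, by ring⟩

lemma hasDerivAt_arc (t : ℝ) : HasDerivAt (arc e w) (arc w (-e) t) t := by
  have h := ((Real.hasDerivAt_cos t).smul_const e).add ((Real.hasDerivAt_sin t).smul_const w)
  refine h.congr_deriv ?_
  simp [arc, add_comm]

@[fun_prop]
lemma continuous_arc : Continuous (arc e w) := by
  unfold arc; fun_prop

lemma exists_arc_angle_eq (h : Orthonormal ℝ ![e, w]) (hy : ‖y‖ = 1) :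
    ∃ w', Orthonormal ℝ ![e, w'] ∧ arc e w' (InnerProductGeometry.angle e y) = y := by
  have he : ‖e‖ = 1 := (orthonormal_pair_iff.mp h).1
  set φ := InnerProductGeometry.angle e y with hφ
  have hcos : ⟪e, y⟫ = Real.cos φ := by simp [hφ, InnerProductGeometry.cos_angle, he, hy]
  set z := y - Real.cos φ • e with hz
  have hz_norm : ‖z‖ = Real.sin φ := by
    refine (sq_eq_sq₀ (norm_nonneg _) (InnerProductGeometry.sin_angle_nonneg e y)).mp ?_
    rw [hz, norm_sub_sq_real, norm_smul, inner_smul_right, real_inner_comm, hcos, he, hy,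
      Real.sin_sq, Real.norm_eq_abs, mul_one, sq_abs]
    ring
  have hz_inner : ⟪e, z⟫ = 0 := by
    simp [hz, inner_sub_right, inner_smul_right, hcos, he]
  rcases eq_or_ne z 0 with hz0 | hz0
  · refine ⟨w, h, ?_⟩
    rw [arc, ← hz_norm, hz0, norm_zero, zero_smul, add_zero, ← sub_eq_zero.mp hz0]
  · refine ⟨‖z‖⁻¹ • z, orthonormal_pair_iff.mpr ⟨he, norm_smul_inv_norm hz0, ?_⟩, ?_⟩
    · rw [inner_smul_right, hz_inner, mul_zero]
    · rw [arc, ← hz_norm, smul_inv_smul₀ (norm_ne_zero_iff.mpr hz0), hz, add_sub_cancel]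

end Arc

section Increments

lemma continuousOn_fderiv_of_contDiffAt {V F : Type*} [NormedAddCommGroup V] [NormedSpace ℝ V]
    [NormedAddCommGroup F] [NormedSpace ℝ F] {g : V → F} {s : Set V}
    (hg : ∀ x ∈ s, ContDiffAt ℝ 1 g x) : ContinuousOn (fderiv ℝ g) s :=
  fun x hx => ((hg x hx).fderiv_right (m := 0) le_rfl).continuousAt.continuousWithinAt

variable {V F : Type*} [NormedAddCommGroup V] [InnerProductSpace ℝ V] [FiniteDimensional ℝ V]
  {e w e' w' y : V}

lemma continuous_comp_orth_smul {X T : Type*} [TopologicalSpace X] [TopologicalSpace T]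
    {φ : V → T} (hφ : ContinuousOn φ (sphere 0 1)) {u : X → OrthGroup V} (hu : Continuous u)
    {x : X → V} (hx : Continuous x) (hx1 : ∀ p, ‖x p‖ = 1) : Continuous fun p => φ (u p • x p) :=
  hφ.comp_continuous (hu.smul hx) fun p => by simp [hx1]

variable [NormedAddCommGroup F] {g : V → F}

lemma memLp_comp_orth_smul (hg : ContinuousOn g (sphere 0 1)) (he : ‖e‖ = 1) :
    MemLp (fun u : OrthGroup V => g (u • e)) 2 (orthHaar V) :=
  (continuous_comp_orth_smul hg continuous_id continuous_const fun _ =>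
    he).memLp_of_hasCompactSupport (.of_compactSpace _)

variable [NormedSpace ℝ F]

lemma hasDerivAt_comp_smul_arc {u : OrthGroup V} {t : ℝ}
    (hg : DifferentiableAt ℝ g (u • arc e w t)) :
    HasDerivAt (fun s => g (u • arc e w s)) (fderiv ℝ g (u • arc e w t) (u • arc w (-e) t)) t :=
  hg.hasFDerivAt.comp_hasDerivAt t
    ((u : V →L[ℝ] V).hasFDerivAt.comp_hasDerivAt t (hasDerivAt_arc t))

/-- The mean square of the derivative of `g` at a uniformly random point of the sphere in a
uniformly random tangential direction, sampled as a Haar-random rotation of a pair `(e, w)`.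
The value is the same for all orthonormal pairs. -/
def tangentEnergy (g : V → F) (e w : V) : ℝ :=
  ∫ u : OrthGroup V, ‖fderiv ℝ g (u • e) (u • w)‖ ^ 2 ∂orthHaar V

lemma tangentEnergy_congr (h : Orthonormal ℝ ![e, w]) (h' : Orthonormal ℝ ![e', w']) :
    tangentEnergy g e w = tangentEnergy g e' w' :=
  integral_orth_pair h h' fun x z => ‖fderiv ℝ g x z‖ ^ 2

lemma tangentEnergy_nonneg : 0 ≤ tangentEnergy g e w := integral_nonneg fun _ => sq_nonneg _

variable [CompleteSpace F]

lemma integral_norm_sub_sq_arc_le (hg : ∀ x ∈ sphere (0 : V) 1, ContDiffAt ℝ 1 g x)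
    (h : Orthonormal ℝ ![e, w]) (φ : ℝ) :
    ∫ u : OrthGroup V, ‖g (u • arc e w φ) - g (u • e)‖ ^ 2 ∂orthHaar V
      ≤ φ ^ 2 * tangentEnergy g e w := by
  have h_norm (t : ℝ) : ‖arc e w t‖ = 1 := (orthonormal_pair_iff.mp (orthonormal_arc h t)).1
  let k' (u : OrthGroup V) (t : ℝ) : F :=
    φ • fderiv ℝ g (u • arc e w (φ * t)) (u • arc w (-e) (φ * t))
  have hk : ∀ u t, HasDerivAt (fun s => g (u • arc e w (φ * s))) (k' u t) t := fun u t => by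
    have hd : DifferentiableAt ℝ g (u • arc e w (φ * t)) :=
      (hg _ (by simp [h_norm])).differentiableAt one_ne_zero
    simpa [k', Function.comp_def] using
      (hasDerivAt_comp_smul_arc hd).scomp t ((hasDerivAt_id t).const_mul φ)
  have hc : Continuous k'.uncurry := by
    refine continuous_const.smul (Continuous.clm_apply ?_ ?_)
    · exact continuous_comp_orth_smul (continuousOn_fderiv_of_contDiffAt hg) continuous_fst
        (by fun_prop) fun _ => h_norm _
    · exact continuous_fst.smul (by fun_prop)
  have h_energy : ∀ t, ∫ u, ‖k' u t‖ ^ 2 ∂orthHaar V = φ ^ 2 * tangentEnergy g e w := fun t => by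
    simp_rw [k', norm_smul, mul_pow, integral_const_mul, Real.norm_eq_abs, sq_abs]
    rw [tangentEnergy_congr h (orthonormal_arc h (φ * t)), tangentEnergy]
  simpa [h_energy] using integral_norm_sub_sq_le_of_stationary (μ := orthHaar V) hk hc
    fun t => (h_energy t).trans (h_energy 0).symm

lemma integral_norm_sub_sq_le_angle_sq (hg : ∀ x ∈ sphere (0 : V) 1, ContDiffAt ℝ 1 g x)
    (h : Orthonormal ℝ ![e, w]) (hy : ‖y‖ = 1) :
    ∫ u : OrthGroup V, ‖g (u • y) - g (u • e)‖ ^ 2 ∂orthHaar V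
      ≤ InnerProductGeometry.angle e y ^ 2 * tangentEnergy g e w := by
  obtain ⟨w', h', harc⟩ := exists_arc_angle_eq h hy
  rw [tangentEnergy_congr h h']
  simpa only [harc] using integral_norm_sub_sq_arc_le hg h' (InnerProductGeometry.angle e y)

end Increments

section Poincare

variable {X F : Type*} [NormedAddCommGroup F] [InnerProductSpace ℝ F]

lemma integral_norm_half_add_sq_add_half_sub_sq [MeasurableSpace X] {μ : Measure X} {a b : X → F}
    (ha : MemLp a 2 μ) (hb : MemLp b 2 μ) (hab : ∫ x, ‖b x‖ ^ 2 ∂μ = ∫ x, ‖a x‖ ^ 2 ∂μ) :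
    ∫ x, ‖(1 / 2 : ℝ) • (a x + b x)‖ ^ 2 ∂μ + ∫ x, ‖(1 / 2 : ℝ) • (a x - b x)‖ ^ 2 ∂μ
      = ∫ x, ‖a x‖ ^ 2 ∂μ := by
  have h_parallelogram (x : X) : ‖(1 / 2 : ℝ) • (a x + b x)‖ ^ 2 + ‖(1 / 2 : ℝ) • (a x - b x)‖ ^ 2
      = 1 / 2 * (‖a x‖ ^ 2 + ‖b x‖ ^ 2) := by
    have := parallelogram_law_with_norm ℝ (a x) (b x)
    simp only [norm_smul, mul_pow, Real.norm_eq_abs, sq_abs]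
    linarith
  have h_add : Integrable (fun x => ‖(1 / 2 : ℝ) • (a x + b x)‖ ^ 2) μ :=
    ((ha.add hb).const_smul _).integrable_norm_pow two_ne_zero
  have h_sub : Integrable (fun x => ‖(1 / 2 : ℝ) • (a x - b x)‖ ^ 2) μ :=
    ((ha.sub hb).const_smul _).integrable_norm_pow two_ne_zero
  rw [← integral_add h_add h_sub]
  simp_rw [h_parallelogram]
  rw [integral_const_mul, integral_add (ha.integrable_norm_pow two_ne_zero)
    (hb.integrable_norm_pow two_ne_zero), hab]
  ring

variable {V : Type*} [NormedAddCommGroup V]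

/-- The even part `x ↦ (g x + g (-x)) / 2` of `g`. -/
def evenPart (g : V → F) (x : V) : F := (1 / 2 : ℝ) • (g x + g (-x))

/-- The odd part `x ↦ (g x - g (-x)) / 2` of `g`. -/
def oddPart (g : V → F) (x : V) : F := (1 / 2 : ℝ) • (g x - g (-x))

variable {g : V → F}

lemma even_evenPart : (evenPart g).Even := fun x => by simp [evenPart, add_comm]

lemma odd_oddPart : (oddPart g).Odd := fun x => by simp [oddPart, ← smul_neg]

variable [InnerProductSpace ℝ V] {e w y : V}

lemma contDiffAt_comp_neg (hg : ∀ x ∈ sphere (0 : V) 1, ContDiffAt ℝ 1 g x) :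
    ∀ x ∈ sphere (0 : V) 1, ContDiffAt ℝ 1 (fun z => g (-z)) x :=
  fun x hx => ContDiffAt.comp x (hg (-x) (by simpa using hx)) contDiffAt_id.neg

lemma fderiv_comp_neg_apply (x y : V) : fderiv ℝ (fun z => g (-z)) x y = fderiv ℝ g (-x) (-y) :=
  DFunLike.congr_fun
    ((ContinuousLinearEquiv.neg ℝ (M := V)).comp_right_fderiv (f := g) (x := x)) y

variable [FiniteDimensional ℝ V]

lemma tangentEnergy_evenPart_add_oddPart (hg : ∀ x ∈ sphere (0 : V) 1, ContDiffAt ℝ 1 g x)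
    (h : Orthonormal ℝ ![e, w]) :
    tangentEnergy (evenPart g) e w + tangentEnergy (oddPart g) e w = tangentEnergy g e w := by
  have he : ‖e‖ = 1 := (orthonormal_pair_iff.mp h).1
  have h_neg : Orthonormal ℝ ![-e, -w] := by simpa [orthonormal_pair_iff] using h
  have hd : ∀ u : OrthGroup V, DifferentiableAt ℝ g (u • e) := fun u =>
    (hg _ (by simp [he])).differentiableAt one_ne_zero
  have hd' : ∀ u : OrthGroup V, DifferentiableAt ℝ (fun z => g (-z)) (u • e) := fun u =>
    (contDiffAt_comp_neg hg _ (by simp [he])).differentiableAt one_ne_zero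
  have h_even (u : OrthGroup V) : fderiv ℝ (evenPart g) (u • e) (u • w)
      = (1 / 2 : ℝ) • (fderiv ℝ g (u • e) (u • w) + fderiv ℝ g (u • -e) (u • -w)) := by
    unfold evenPart
    rw [fderiv_fun_const_smul ((hd u).fun_add (hd' u)), fderiv_fun_add (hd u) (hd' u)]
    simp [fderiv_comp_neg_apply]
  have h_odd (u : OrthGroup V) : fderiv ℝ (oddPart g) (u • e) (u • w)
      = (1 / 2 : ℝ) • (fderiv ℝ g (u • e) (u • w) - fderiv ℝ g (u • -e) (u • -w)) := by
    unfold oddPart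
    rw [fderiv_fun_const_smul ((hd u).fun_sub (hd' u)), fderiv_fun_sub (hd u) (hd' u)]
    simp [fderiv_comp_neg_apply]
  have h_memLp (x z : V) (hx : ‖x‖ = 1) :
      MemLp (fun u : OrthGroup V => fderiv ℝ g (u • x) (u • z)) 2 (orthHaar V) := by
    refine Continuous.memLp_of_hasCompactSupport ?_ (.of_compactSpace _)
    exact (continuous_comp_orth_smul (continuousOn_fderiv_of_contDiffAt hg) continuous_id
      continuous_const fun _ => hx).clm_apply (by fun_prop)
  simp_rw [tangentEnergy, h_even, h_odd]
  exact integral_norm_half_add_sq_add_half_sub_sq (h_memLp e w he) (h_memLp (-e) (-w) (by simpa))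
    (tangentEnergy_congr h_neg h)

variable [CompleteSpace F]

lemma integral_norm_sq_le_of_odd (hg : ∀ x ∈ sphere (0 : V) 1, ContDiffAt ℝ 1 g x)
    (hodd : g.Odd) (h : Orthonormal ℝ ![e, w]) :
    ∫ u : OrthGroup V, ‖g (u • e)‖ ^ 2 ∂orthHaar V ≤ Real.pi ^ 2 / 8 * tangentEnergy g e w := by
  obtain ⟨he, hw, hew⟩ := orthonormal_pair_iff.mp h
  have hgc : ContinuousOn g (sphere 0 1) := fun x hx => (hg x hx).continuousAt.continuousWithinAt
  have h_le : ∫ u : OrthGroup V, ‖g (u • w) - g (u • e)‖ ^ 2 ∂orthHaar V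
      ≤ (Real.pi / 2) ^ 2 * tangentEnergy g e w := by
    rw [← (InnerProductGeometry.inner_eq_zero_iff_angle_eq_pi_div_two e w).mp hew]
    exact integral_norm_sub_sq_le_angle_sq hg h hw
  have h_add : ∫ u : OrthGroup V, ‖g (u • w) + g (u • e)‖ ^ 2 ∂orthHaar V
      = ∫ u : OrthGroup V, ‖g (u • w) - g (u • e)‖ ^ 2 ∂orthHaar V := by
    have h' : Orthonormal ℝ ![-e, w] := by simpa [orthonormal_pair_iff] using h
    simpa [hodd _] using integral_orth_pair h' h fun x z => ‖g z - g x‖ ^ 2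
  have h_unit := integral_orth_unit he hw fun x => ‖g x‖ ^ 2
  have h_split := integral_norm_half_add_sq_add_half_sub_sq (memLp_comp_orth_smul hgc hw)
    (memLp_comp_orth_smul hgc he) h_unit
  simp_rw [norm_smul, mul_pow, integral_const_mul] at h_split
  rw [h_add] at h_split
  norm_num at h_split
  linarith

lemma integral_norm_sub_sq_le_of_even (hg : ∀ x ∈ sphere (0 : V) 1, ContDiffAt ℝ 1 g x)
    (heven : g.Even) (h : Orthonormal ℝ ![e, w]) (hy : ‖y‖ = 1) :
    ∫ u : OrthGroup V, ‖g (u • y) - g (u • e)‖ ^ 2 ∂orthHaar V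
      ≤ (Real.pi / 2) ^ 2 * tangentEnergy g e w := by
  have h_angle (z : V) (hz : ‖z‖ = 1) (hez : InnerProductGeometry.angle e z ≤ Real.pi / 2) :
      ∫ u : OrthGroup V, ‖g (u • z) - g (u • e)‖ ^ 2 ∂orthHaar V
        ≤ (Real.pi / 2) ^ 2 * tangentEnergy g e w := by
    refine (integral_norm_sub_sq_le_angle_sq hg h hz).trans ?_
    gcongr
    exacts [tangentEnergy_nonneg, InnerProductGeometry.angle_nonneg e z]
  rcases le_total (InnerProductGeometry.angle e y) (Real.pi / 2) with hle | hle
  · exact h_angle y hy hle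
  · have := h_angle (-y) (by simpa) (by rw [InnerProductGeometry.angle_neg_right]; linarith)
    simpa [heven _] using this

lemma integral_norm_sub_integral_sq_le_of_even (hg : ∀ x ∈ sphere (0 : V) 1, ContDiffAt ℝ 1 g x)
    (heven : g.Even) (h : Orthonormal ℝ ![e, w]) :
    ∫ u : OrthGroup V, ‖g (u • e) - ∫ v : OrthGroup V, g (v • e) ∂orthHaar V‖ ^ 2 ∂orthHaar V
      ≤ Real.pi ^ 2 / 8 * tangentEnergy g e w := by
  have he : ‖e‖ = 1 := (orthonormal_pair_iff.mp h).1
  have hgc : ContinuousOn g (sphere 0 1) := fun x hx => (hg x hx).continuousAt.continuousWithinAt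
  have hc : Continuous fun u : OrthGroup V => g (u • e) :=
    continuous_comp_orth_smul hgc continuous_id continuous_const fun _ => he
  have hint : Integrable (fun p : OrthGroup V × OrthGroup V =>
      ‖g ((p.1 * p.2) • e) - g (p.1 • e)‖ ^ 2) ((orthHaar V).prod (orthHaar V)) :=
    integrable_of_compactSpace
      (((hc.comp continuous_mul).sub (hc.comp continuous_fst)).norm.pow 2)
  have h_double : ∫ r : OrthGroup V, (∫ u : OrthGroup V,
      ‖g (u • e) - g (r • e)‖ ^ 2 ∂orthHaar V) ∂orthHaar V
      ≤ (Real.pi / 2) ^ 2 * tangentEnergy g e w :=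
    calc ∫ r : OrthGroup V, (∫ u : OrthGroup V, ‖g (u • e) - g (r • e)‖ ^ 2 ∂orthHaar V) ∂orthHaar V
        = ∫ r : OrthGroup V, (∫ u : OrthGroup V,
            ‖g ((r * u) • e) - g (r • e)‖ ^ 2 ∂orthHaar V) ∂orthHaar V := by
          congr! 2 with r
          exact (integral_mul_left_eq_self
            (fun u : OrthGroup V => ‖g (u • e) - g (r • e)‖ ^ 2) r).symm
      _ = ∫ u : OrthGroup V, (∫ r : OrthGroup V,
            ‖g (r • u • e) - g (r • e)‖ ^ 2 ∂orthHaar V) ∂orthHaar V := by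
          rw [integral_integral_swap hint]
          simp_rw [mul_smul]
      _ ≤ ∫ _ : OrthGroup V, (Real.pi / 2) ^ 2 * tangentEnergy g e w ∂orthHaar V := by
          refine integral_mono_of_nonneg
            (ae_of_all _ fun _ => integral_nonneg fun _ => sq_nonneg _) (integrable_const _)
            (ae_of_all _ fun u => integral_norm_sub_sq_le_of_even hg heven h (by simpa))
      _ = (Real.pi / 2) ^ 2 * tangentEnergy g e w := by simp
  rw [integral_integral_norm_sub_sq (memLp_comp_orth_smul hgc he)] at h_double
  linarith

lemma integral_norm_sub_integral_sq_le (hg : ∀ x ∈ sphere (0 : V) 1, ContDiffAt ℝ 1 g x)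
    (h : Orthonormal ℝ ![e, w]) :
    ∫ u : OrthGroup V, ‖g (u • e) - ∫ v : OrthGroup V, g (v • e) ∂orthHaar V‖ ^ 2 ∂orthHaar V
      ≤ Real.pi ^ 2 / 8 * tangentEnergy g e w := by
  have he : ‖e‖ = 1 := (orthonormal_pair_iff.mp h).1
  have hgc : ContinuousOn g (sphere 0 1) := fun x hx => (hg x hx).continuousAt.continuousWithinAt
  set m := ∫ v : OrthGroup V, evenPart g (v • e) ∂orthHaar V
  have h_even : ∀ u : OrthGroup V, (1 / 2 : ℝ) • ((g (u • e) - m) + (g (u • -e) - m))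
      = evenPart g (u • e) - m := fun u => by
    rw [evenPart, smul_neg]; module
  have h_odd : ∀ u : OrthGroup V, (1 / 2 : ℝ) • ((g (u • e) - m) - (g (u • -e) - m))
      = oddPart g (u • e) := fun u => by
    rw [oddPart, smul_neg]; module
  have h_split := integral_norm_half_add_sq_add_half_sub_sq
    ((memLp_comp_orth_smul hgc he).sub (memLp_const m))
    ((memLp_comp_orth_smul (e := -e) hgc (by simpa)).sub (memLp_const m))
    (integral_orth_unit (by simpa) he fun x => ‖g x - m‖ ^ 2)
  have hg_neg := contDiffAt_comp_neg hg
  calc ∫ u : OrthGroup V, ‖g (u • e) - ∫ v : OrthGroup V, g (v • e) ∂orthHaar V‖ ^ 2 ∂orthHaar V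
      ≤ ∫ u : OrthGroup V, ‖g (u • e) - m‖ ^ 2 ∂orthHaar V := by
        rw [integral_norm_sub_sq_eq_variance_add (memLp_comp_orth_smul hgc he) m]
        exact le_add_of_nonneg_right (sq_nonneg _)
    _ = ∫ u : OrthGroup V, ‖evenPart g (u • e) - m‖ ^ 2 ∂orthHaar V
          + ∫ u : OrthGroup V, ‖oddPart g (u • e)‖ ^ 2 ∂orthHaar V := by
        simpa only [Pi.sub_apply, h_even, h_odd] using h_split.symm
    _ ≤ Real.pi ^ 2 / 8 * tangentEnergy (evenPart g) e w
          + Real.pi ^ 2 / 8 * tangentEnergy (oddPart g) e w :=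
        add_le_add
          (integral_norm_sub_integral_sq_le_of_even
            (fun x hx => ((hg x hx).add (hg_neg x hx)).const_smul _) even_evenPart h)
          (integral_norm_sq_le_of_odd
            (fun x hx => ((hg x hx).sub (hg_neg x hx)).const_smul _) odd_oddPart h)
    _ = Real.pi ^ 2 / 8 * tangentEnergy g e w := by
        rw [← mul_add, tangentEnergy_evenPart_add_oddPart hg h]

end Poincare

section HilbertSchmidt

variable {V F : Type*} [NormedAddCommGroup V] [InnerProductSpace ℝ V] [FiniteDimensional ℝ V]
  [NormedAddCommGroup F] [InnerProductSpace ℝ F] [CompleteSpace F]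
  {ι κ : Type*} [Fintype ι] [Fintype κ]

lemma sum_norm_sq_apply_basis_eq (A : V →L[ℝ] F) (b : OrthonormalBasis ι ℝ V)
    (c : OrthonormalBasis κ ℝ V) : ∑ i, ‖A (b i)‖ ^ 2 = ∑ k, ‖A (c k)‖ ^ 2 := by
  have h (x : V) : ‖A x‖ ^ 2 = ⟪x, (A.adjoint ∘L A).toLinearMap x⟫ := by
    simp [ContinuousLinearMap.adjoint_inner_right]
  simp_rw [h, ← LinearMap.trace_eq_sum_inner]

variable {e w : V} {g : V → F}

lemma finrank_sub_one_mul_tangentEnergy_le (hg : ∀ x ∈ sphere (0 : V) 1, ContDiffAt ℝ 1 g x)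
    (h : Orthonormal ℝ ![e, w]) (b : OrthonormalBasis ι ℝ V) :
    ((Module.finrank ℝ V : ℝ) - 1) * tangentEnergy g e w
      ≤ ∫ u : OrthGroup V, ∑ i, ‖fderiv ℝ g (u • e) (b i)‖ ^ 2 ∂orthHaar V := by
  classical
  have he : ‖e‖ = 1 := (orthonormal_pair_iff.mp h).1
  have : Nontrivial V := ⟨e, 0, norm_ne_zero_iff.mp (he ▸ one_ne_zero)⟩
  obtain ⟨i₀⟩ : Nonempty ι := b.toBasis.index_nonempty
  have h_rotate (u : OrthGroup V) : ∑ i, ‖fderiv ℝ g (u • b i₀) (b i)‖ ^ 2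
      = ∑ i, ‖fderiv ℝ g (u • b i₀) (u • b i)‖ ^ 2 :=
    sum_norm_sq_apply_basis_eq _ b (b.map (Unitary.linearIsometryEquiv u))
  have h_int (i : ι) : Integrable
      (fun u : OrthGroup V => ‖fderiv ℝ g (u • b i₀) (u • b i)‖ ^ 2) (orthHaar V) :=
    integrable_of_compactSpace <| ((continuous_comp_orth_smul (continuousOn_fderiv_of_contDiffAt hg)
      continuous_id continuous_const fun _ => b.norm_eq_one i₀).clm_apply (by fun_prop)).norm.pow 2
  have h_tangent : ∀ i ∈ Finset.univ.erase i₀,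
      tangentEnergy g (b i₀) (b i) = tangentEnergy g e w := fun i hi =>
    tangentEnergy_congr (orthonormal_pair_iff.mpr ⟨b.norm_eq_one i₀, b.norm_eq_one i,
      b.inner_eq_zero (Finset.ne_of_mem_erase hi).symm⟩) h
  calc ((Module.finrank ℝ V : ℝ) - 1) * tangentEnergy g e w
      = ∑ i ∈ Finset.univ.erase i₀, tangentEnergy g (b i₀) (b i) := by
        rw [Finset.sum_congr rfl h_tangent, Finset.sum_const, nsmul_eq_mul,
          Finset.cast_card_erase_of_mem (Finset.mem_univ i₀), Finset.card_univ,
          Module.finrank_eq_card_basis b.toBasis]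
    _ ≤ ∑ i, tangentEnergy g (b i₀) (b i) :=
        Finset.sum_le_univ_sum_of_nonneg fun _ => tangentEnergy_nonneg
    _ = ∫ u : OrthGroup V, ∑ i, ‖fderiv ℝ g (u • b i₀) (b i)‖ ^ 2 ∂orthHaar V := by
        simp_rw [h_rotate, tangentEnergy]
        rw [integral_finsetSum _ fun i _ => h_int i]
    _ = ∫ u : OrthGroup V, ∑ i, ‖fderiv ℝ g (u • e) (b i)‖ ^ 2 ∂orthHaar V :=
        integral_orth_unit (b.norm_eq_one i₀) he fun x => ∑ i, ‖fderiv ℝ g x (b i)‖ ^ 2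

end HilbertSchmidt

section IntegrationByParts

variable {V F : Type*} [NormedAddCommGroup V] [InnerProductSpace ℝ V] [FiniteDimensional ℝ V]
  [NormedAddCommGroup F] [NormedSpace ℝ F] {f : V → F} {e w : V}

lemma hasDerivAt_inner_arc_smul {u : OrthGroup V} {t : ℝ}
    (hf : DifferentiableAt ℝ f (u • arc e w t)) (v : V) :
    HasDerivAt (fun s => ⟪v, u • arc w (-e) s⟫ • f (u • arc e w s))
      (⟪v, u • arc w (-e) t⟫ • fderiv ℝ f (u • arc e w t) (u • arc w (-e) t)
        - ⟪v, u • arc e w t⟫ • f (u • arc e w t)) t := by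
  have h_inner : HasDerivAt (fun s => ⟪v, u • arc w (-e) s⟫) (-⟪v, u • arc e w t⟫) t := by
    refine (((innerSL ℝ v) ∘L (u : V →L[ℝ] V)).hasFDerivAt.comp_hasDerivAt t
      (hasDerivAt_arc t)).congr_deriv ?_
    rw [arc_neg_neg]
    simp [Submonoid.smul_def]
  refine (h_inner.smul (hasDerivAt_comp_smul_arc hf)).congr_deriv ?_
  rw [neg_smul, ← sub_eq_add_neg]

lemma integrable_inner_smul_comp_orth_smul (hf : ContinuousOn f (sphere 0 1)) (he : ‖e‖ = 1)
    (v : V) : Integrable (fun u : OrthGroup V => ⟪v, u • e⟫ • f (u • e)) (orthHaar V) :=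
  integrable_of_compactSpace <| Continuous.smul (by fun_prop) <|
    continuous_comp_orth_smul hf continuous_id continuous_const fun _ => he

lemma integrable_inner_smul_fderiv_comp_orth_smul
    (hf : ∀ x ∈ sphere (0 : V) 1, ContDiffAt ℝ 1 f x) (he : ‖e‖ = 1) (v : V) :
    Integrable (fun u : OrthGroup V => ⟪v, u • w⟫ • fderiv ℝ f (u • e) (u • w)) (orthHaar V) :=
  integrable_of_compactSpace <| Continuous.smul (by fun_prop) <| Continuous.clm_apply
    (continuous_comp_orth_smul (continuousOn_fderiv_of_contDiffAt hf) continuous_id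
      continuous_const fun _ => he) (by fun_prop)

variable [CompleteSpace F]

lemma integral_inner_smul_fderiv_tangent (hf : ∀ x ∈ sphere (0 : V) 1, ContDiffAt ℝ 1 f x)
    (h : Orthonormal ℝ ![e, w]) (v : V) :
    ∫ u : OrthGroup V, ⟪v, u • w⟫ • fderiv ℝ f (u • e) (u • w) ∂orthHaar V
      = ∫ u : OrthGroup V, ⟪v, u • e⟫ • f (u • e) ∂orthHaar V := by
  have he : ‖e‖ = 1 := (orthonormal_pair_iff.mp h).1
  have h_norm (t : ℝ) : ‖arc e w t‖ = 1 := (orthonormal_pair_iff.mp (orthonormal_arc h t)).1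
  have hfc : ContinuousOn f (sphere 0 1) := fun x hx => (hf x hx).continuousAt.continuousWithinAt
  let Φ (x z : V) : F := ⟪v, z⟫ • fderiv ℝ f x z - ⟪v, x⟫ • f x
  have hd (u : OrthGroup V) (t : ℝ) : DifferentiableAt ℝ f (u • arc e w t) :=
    (hf _ (by simp [h_norm])).differentiableAt one_ne_zero
  have he_arc : Continuous fun p : OrthGroup V × ℝ => p.1 • arc e w p.2 := by fun_prop
  have hw_arc : Continuous fun p : OrthGroup V × ℝ => p.1 • arc w (-e) p.2 := by fun_prop
  have hf_arc : Continuous fun p : OrthGroup V × ℝ => f (p.1 • arc e w p.2) :=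
    continuous_comp_orth_smul hfc continuous_fst (by fun_prop) fun _ => h_norm _
  have hD_arc : Continuous fun p : OrthGroup V × ℝ => fderiv ℝ f (p.1 • arc e w p.2) :=
    continuous_comp_orth_smul (continuousOn_fderiv_of_contDiffAt hf) continuous_fst
      (by fun_prop) fun _ => h_norm _
  have h_zero : ∫ u : OrthGroup V, Φ (u • arc e w 0) (u • arc w (-e) 0) ∂orthHaar V = 0 :=
    integral_deriv_eq_zero_of_stationary (fun u t => hasDerivAt_inner_arc_smul (hd u t) v)
      (fun t => ((continuous_const.inner hw_arc).smul hf_arc).comp (Continuous.prodMk_left t))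
      (((continuous_const.inner hw_arc).smul (hD_arc.clm_apply hw_arc)).sub
        ((continuous_const.inner he_arc).smul hf_arc))
      (fun t => integral_orth_pair (orthonormal_arc h t) (orthonormal_arc h 0)
        fun x z => ⟪v, z⟫ • f x)
      fun t => integral_orth_pair (orthonormal_arc h t) (orthonormal_arc h 0) Φ
  simp_rw [arc_zero, Φ] at h_zero
  rwa [integral_sub (integrable_inner_smul_fderiv_comp_orth_smul hf he v)
    (integrable_inner_smul_comp_orth_smul hfc he v), sub_eq_zero] at h_zero

lemma integral_fderiv_apply (hf : ∀ x ∈ sphere (0 : V) 1, ContDiffAt ℝ 1 f x) (he : ‖e‖ = 1)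
    (v : V) :
    ∫ u : OrthGroup V, fderiv ℝ f (u • e) v ∂orthHaar V
      = ∫ u : OrthGroup V, ⟪v, u • e⟫ • fderiv ℝ f (u • e) (u • e) ∂orthHaar V
        + ((Module.finrank ℝ V : ℝ) - 1) •
          ∫ u : OrthGroup V, ⟪v, u • e⟫ • f (u • e) ∂orthHaar V := by
  have : Nontrivial V := ⟨e, 0, norm_ne_zero_iff.mp (he ▸ one_ne_zero)⟩
  let b := stdOrthonormalBasis ℝ V
  obtain ⟨i₀⟩ : Nonempty (Fin (Module.finrank ℝ V)) := b.toBasis.index_nonempty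
  have hb₀ : ‖b i₀‖ = 1 := b.norm_eq_one i₀
  have h_expand (u : OrthGroup V) : fderiv ℝ f (u • b i₀) v
      = ∑ i, ⟪v, u • b i⟫ • fderiv ℝ f (u • b i₀) (u • b i) := by
    conv_lhs => rw [← (b.map (Unitary.linearIsometryEquiv u)).sum_repr' v, map_sum]
    simp_rw [map_smul, real_inner_comm v]
    rfl
  have h_tangent : ∀ i ∈ Finset.univ.erase i₀,
      ∫ u : OrthGroup V, ⟪v, u • b i⟫ • fderiv ℝ f (u • b i₀) (u • b i) ∂orthHaar V
        = ∫ u : OrthGroup V, ⟪v, u • b i₀⟫ • f (u • b i₀) ∂orthHaar V := fun i hi =>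
    integral_inner_smul_fderiv_tangent hf (orthonormal_pair_iff.mpr ⟨hb₀, b.norm_eq_one i,
      b.inner_eq_zero (Finset.ne_of_mem_erase hi).symm⟩) v
  rw [integral_orth_unit he hb₀ fun x => fderiv ℝ f x v,
    integral_orth_unit he hb₀ fun x => ⟪v, x⟫ • fderiv ℝ f x x,
    integral_orth_unit he hb₀ fun x => ⟪v, x⟫ • f x]
  simp_rw [h_expand]
  rw [integral_finsetSum _ fun i _ => integrable_inner_smul_fderiv_comp_orth_smul hf hb₀ v,
    ← Finset.add_sum_erase _ _ (Finset.mem_univ i₀), Finset.sum_congr rfl h_tangent,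
    Finset.sum_const, Finset.card_erase_of_mem (Finset.mem_univ i₀), Finset.card_univ,
    Fintype.card_fin, ← Nat.cast_smul_eq_nsmul ℝ, Nat.cast_pred Module.finrank_pos]

end IntegrationByParts

section Gradient

variable {V : Type*} [NormedAddCommGroup V] [InnerProductSpace ℝ V] [CompleteSpace V] {f : V → ℝ}

lemma contDiffAt_gradient {x : V} {k : WithTop ℕ∞} (hf : ContDiffAt ℝ (k + 1) f x) :
    ContDiffAt ℝ k (gradient f) x :=
  (InnerProductSpace.toDual ℝ V).symm.contDiff.contDiffAt.comp x (hf.fderiv_right le_rfl)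

lemma continuousOn_gradient_of_contDiffAt {s : Set V} (hf : ∀ x ∈ s, ContDiffAt ℝ 1 f x) :
    ContinuousOn (gradient f) s :=
  (InnerProductSpace.toDual ℝ V).symm.continuous.comp_continuousOn
    (continuousOn_fderiv_of_contDiffAt hf)

end Gradient

section MeanGradient

variable {V : Type*} [NormedAddCommGroup V] [InnerProductSpace ℝ V] [FiniteDimensional ℝ V]
  {f : V → ℝ} {e : V}

lemma finrank_mul_integral_inner_sq (he : ‖e‖ = 1) (v : V) :
    (Module.finrank ℝ V : ℝ) * ∫ u : OrthGroup V, ⟪v, u • e⟫ ^ 2 ∂orthHaar V = ‖v‖ ^ 2 := by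
  have h := integral_fderiv_apply (f := innerSL ℝ v) (fun x _ => (innerSL ℝ v).contDiff.contDiffAt)
    he v
  simp only [ContinuousLinearMap.fderiv, innerSL_apply_apply, real_inner_self_eq_norm_sq,
    smul_eq_mul, ← pow_two, integral_const, probReal_univ, one_mul] at h
  linarith

lemma inner_integral_gradient_eq (hf : ∀ x ∈ sphere (0 : V) 1, ContDiffAt ℝ 1 f x)
    (he : ‖e‖ = 1)
    (h_orth : ∀ v : V, ∫ u : OrthGroup V, ⟪v, u • e⟫ * f (u • e) ∂orthHaar V = 0) (v : V) :
    ⟪v, ∫ u : OrthGroup V, gradient f (u • e) ∂orthHaar V⟫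
      = ∫ u : OrthGroup V, ⟪v, u • e⟫ * ⟪gradient f (u • e), u • e⟫ ∂orthHaar V := by
  have h_int : Integrable (fun u : OrthGroup V => gradient f (u • e)) (orthHaar V) :=
    (memLp_comp_orth_smul (continuousOn_gradient_of_contDiffAt hf) he).integrable one_le_two
  have h := integral_fderiv_apply hf he v
  simp_rw [smul_eq_mul, h_orth, mul_zero, add_zero, ← inner_gradient_left] at h
  simp_rw [← integral_inner h_int, ← h, real_inner_comm]

lemma finrank_sub_one_mul_norm_integral_gradient_sq_eq
    (hf : ∀ x ∈ sphere (0 : V) 1, ContDiffAt ℝ 1 f x) (he : ‖e‖ = 1)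
    (h_orth : ∀ v : V, ∫ u : OrthGroup V, ⟪v, u • e⟫ * f (u • e) ∂orthHaar V = 0) {m : V}
    (hm : m = ∫ u : OrthGroup V, gradient f (u • e) ∂orthHaar V) :
    ((Module.finrank ℝ V : ℝ) - 1) * ‖m‖ ^ 2 = (Module.finrank ℝ V : ℝ)
      * ∫ u : OrthGroup V, ⟪m, u • e⟫ * ⟪gradient f (u • e) - m, u • e⟫ ∂orthHaar V := by
  have hG : Continuous fun u : OrthGroup V => gradient f (u • e) :=
    continuous_comp_orth_smul (continuousOn_gradient_of_contDiffAt hf) continuous_id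
      continuous_const fun _ => he
  have h_mean : ∫ u : OrthGroup V, ⟪m, u • e⟫ * ⟪gradient f (u • e), u • e⟫ ∂orthHaar V
      = ‖m‖ ^ 2 := by
    rw [← inner_integral_gradient_eq hf he h_orth, ← hm, real_inner_self_eq_norm_sq]
  have h_second := finrank_mul_integral_inner_sq he m
  simp_rw [inner_sub_left, mul_sub, ← pow_two]
  rw [integral_sub (integrable_of_compactSpace (by fun_prop))
    (integrable_of_compactSpace (by fun_prop)), h_mean]
  linarith

lemma finrank_sub_one_sq_mul_norm_integral_gradient_sq_le
    (hf : ∀ x ∈ sphere (0 : V) 1, ContDiffAt ℝ 1 f x) (he : ‖e‖ = 1)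
    (h_orth : ∀ v : V, ∫ u : OrthGroup V, ⟪v, u • e⟫ * f (u • e) ∂orthHaar V = 0) :
    ((Module.finrank ℝ V : ℝ) - 1) ^ 2 * ‖∫ u : OrthGroup V, gradient f (u • e) ∂orthHaar V‖ ^ 2
      ≤ (Module.finrank ℝ V : ℝ) * ∫ u : OrthGroup V, ‖gradient f (u • e)
        - ∫ v : OrthGroup V, gradient f (v • e) ∂orthHaar V‖ ^ 2 ∂orthHaar V := by
  set m := ∫ u : OrthGroup V, gradient f (u • e) ∂orthHaar V with hm
  have h_eq := finrank_sub_one_mul_norm_integral_gradient_sq_eq hf he h_orth hm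
  have h_second := finrank_mul_integral_inner_sq he m
  set d := (Module.finrank ℝ V : ℝ)
  have hd : 0 ≤ d := Nat.cast_nonneg _
  have hG : Continuous fun u : OrthGroup V => gradient f (u • e) :=
    continuous_comp_orth_smul (continuousOn_gradient_of_contDiffAt hf) continuous_id
      continuous_const fun _ => he
  have h_amgm (u : OrthGroup V) : 2 * (d - 1) * (⟪m, u • e⟫ * ⟪gradient f (u • e) - m, u • e⟫)
      ≤ (d - 1) ^ 2 * ⟪m, u • e⟫ ^ 2 + ‖gradient f (u • e) - m‖ ^ 2 := by
    have h_le : |⟪gradient f (u • e) - m, u • e⟫| ≤ ‖gradient f (u • e) - m‖ := by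
      simpa [he] using abs_real_inner_le_norm (gradient f (u • e) - m) (u • e)
    linarith [sq_le_sq.mpr (h_le.trans (le_abs_self _)),
      sq_nonneg ((d - 1) * ⟪m, u • e⟫ - ⟪gradient f (u • e) - m, u • e⟫)]
  have h_integral := integral_mono (μ := orthHaar V) (integrable_of_compactSpace (by fun_prop))
    (integrable_of_compactSpace (by fun_prop)) h_amgm
  rw [integral_const_mul, integral_add (integrable_of_compactSpace (by fun_prop))
    (integrable_of_compactSpace (by fun_prop)), integral_const_mul] at h_integral
  linear_combination mul_le_mul_of_nonneg_left h_integral hd + 2 * (d - 1) * h_eq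
    + (d - 1) ^ 2 * h_second

end MeanGradient

section GradientHessian

variable {V : Type*} [NormedAddCommGroup V] [InnerProductSpace ℝ V] [FiniteDimensional ℝ V]
  {f : V → ℝ} {e : V}

lemma integral_orth_norm_gradient_sq_le {ι : Type*} [Fintype ι] (hV : 2 ≤ Module.finrank ℝ V)
    (hf : ∀ x ∈ sphere (0 : V) 1, ContDiffAt ℝ 2 f x) (he : ‖e‖ = 1)
    (h_orth : ∀ v : V, ∫ u : OrthGroup V, ⟪v, u • e⟫ * f (u • e) ∂orthHaar V = 0)
    (b : OrthonormalBasis ι ℝ V) :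
    ∫ u : OrthGroup V, ‖gradient f (u • e)‖ ^ 2 ∂orthHaar V
      ≤ Real.pi ^ 2 / 8 * (1 + Module.finrank ℝ V / ((Module.finrank ℝ V : ℝ) - 1) ^ 2)
        / ((Module.finrank ℝ V : ℝ) - 1)
        * ∫ u : OrthGroup V, ∑ i, ‖fderiv ℝ (gradient f) (u • e) (b i)‖ ^ 2 ∂orthHaar V := by
  have hd : 1 < (Module.finrank ℝ V : ℝ) := by exact_mod_cast hV
  set d := (Module.finrank ℝ V : ℝ)
  obtain ⟨w, hw⟩ := exists_orthonormal_pair hV he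
  have hf1 : ∀ x ∈ sphere (0 : V) 1, ContDiffAt ℝ 1 f x := fun x hx => (hf x hx).of_le one_le_two
  have hG : ∀ x ∈ sphere (0 : V) 1, ContDiffAt ℝ 1 (gradient f) x := fun x hx =>
    contDiffAt_gradient (by simpa [one_add_one_eq_two] using hf x hx)
  have h_variance := integral_norm_sub_sq_eq_variance_add
    (memLp_comp_orth_smul (continuousOn_gradient_of_contDiffAt hf1) he) 0
  have h_mean := finrank_sub_one_sq_mul_norm_integral_gradient_sq_le hf1 he h_orth
  have h_energy := finrank_sub_one_mul_tangentEnergy_le hG hw b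
  have h_poincare := integral_norm_sub_integral_sq_le hG hw
  simp only [sub_zero] at h_variance
  set m := ∫ u : OrthGroup V, gradient f (u • e) ∂orthHaar V
  set Q := ∫ u : OrthGroup V, ‖gradient f (u • e) - m‖ ^ 2 ∂orthHaar V
  rw [← le_div_iff₀' (by positivity)] at h_mean
  rw [← le_div_iff₀' (sub_pos.mpr hd)] at h_energy
  calc ∫ u : OrthGroup V, ‖gradient f (u • e)‖ ^ 2 ∂orthHaar V
      = Q + ‖m‖ ^ 2 := h_variance
    _ ≤ Q + d * Q / (d - 1) ^ 2 := by gcongr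
    _ = (1 + d / (d - 1) ^ 2) * Q := by ring
    _ ≤ (1 + d / (d - 1) ^ 2) * (Real.pi ^ 2 / 8 *
        ((∫ u : OrthGroup V, ∑ i, ‖fderiv ℝ (gradient f) (u • e) (b i)‖ ^ 2 ∂orthHaar V)
          / (d - 1))) := by
        gcongr
        exact h_poincare.trans (by gcongr)
    _ = _ := by ring

end GradientHessian

section UniformOnSphere

variable {V F : Type*} [NormedAddCommGroup V] [InnerProductSpace ℝ V] [FiniteDimensional ℝ V]
  [MeasurableSpace V] [NormedAddCommGroup F] [NormedSpace ℝ F] {σ : Measure V} {e : V}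

/-- `σ` is the uniform probability measure on the unit sphere of `V`, regarded as a measure on `V`:
it is concentrated on the sphere and invariant under the orthogonal group. -/
structure IsUniformOnSphere (σ : Measure V) : Prop where
  isProbabilityMeasure : IsProbabilityMeasure σ
  ae_norm_eq_one : ∀ᵐ x ∂σ, ‖x‖ = 1
  map_smul_eq : ∀ u : OrthGroup V, σ.map (u • ·) = σ

variable [BorelSpace V]

lemma IsUniformOnSphere.map_orthHaar_smul_eq (hσ : IsUniformOnSphere σ) (he : ‖e‖ = 1) :
    (orthHaar V).map (· • e) = σ := by
  have := hσ.isProbabilityMeasure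
  ext A hA
  have h_orbit {x : V} (hx : ‖x‖ = 1) :
      orthHaar V ((· • x) ⁻¹' A) = orthHaar V ((· • e) ⁻¹' A) := by
    obtain ⟨r, hr⟩ := exists_orth_smul_eq (ι := Unit) (v := fun _ => e) (w := fun _ => x)
      (by simpa [orthonormal_iff_ite]) (by simpa [orthonormal_iff_ite])
    rw [← measure_preimage_mul_right (orthHaar V) r ((· • e) ⁻¹' A), ← hr ()]
    simp only [Set.preimage_preimage, mul_smul]
  have h_rotate (u : OrthGroup V) : σ ((u • ·) ⁻¹' A) = σ A := by
    rw [← Measure.map_apply (by fun_prop) hA, hσ.map_smul_eq]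
  have h_meas : MeasurableSet {p : OrthGroup V × V | p.1 • p.2 ∈ A} :=
    (continuous_smul (M := OrthGroup V) (X := V)).measurable hA
  calc (orthHaar V).map (· • e) A
      = orthHaar V ((· • e) ⁻¹' A) := Measure.map_apply (by fun_prop) hA
    _ = ∫⁻ x, orthHaar V ((· • x) ⁻¹' A) ∂σ := by
        rw [lintegral_congr_ae (hσ.ae_norm_eq_one.mono fun x hx => h_orbit hx)]
        simp
    _ = (orthHaar V).prod σ {p : OrthGroup V × V | p.1 • p.2 ∈ A} :=
        (Measure.prod_apply_symm h_meas).symm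
    _ = ∫⁻ u : OrthGroup V, σ ((u • ·) ⁻¹' A) ∂orthHaar V := Measure.prod_apply h_meas
    _ = σ A := by simp [h_rotate]

lemma IsUniformOnSphere.integral_eq_integral_orthHaar (hσ : IsUniformOnSphere σ) (he : ‖e‖ = 1)
    {φ : V → F} (hφ : ContinuousOn φ (sphere 0 1)) :
    ∫ x, φ x ∂σ = ∫ u : OrthGroup V, φ (u • e) ∂orthHaar V := by
  have h_restrict : σ.restrict (sphere 0 1) = σ :=
    Measure.restrict_eq_self_of_ae_mem (hσ.ae_norm_eq_one.mono fun x hx => by simpa using hx)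
  have hφm : AEStronglyMeasurable φ σ :=
    h_restrict ▸ hφ.aestronglyMeasurable isClosed_sphere.measurableSet
  rw [← hσ.map_orthHaar_smul_eq he] at hφm ⊢
  exact integral_map (by fun_prop) hφm

end UniformOnSphere

section SphereMeasure

variable {V : Type*} [NormedAddCommGroup V] [NormedSpace ℝ V]

lemma preimage_image2_smul_inter_sphere (W : V ≃ₗᵢ[ℝ] V) (I : Set ℝ) (A : Set V) (r : ℝ) :
    W ⁻¹' Set.image2 (· • ·) I (A ∩ sphere 0 r)
      = Set.image2 (· • ·) I (W ⁻¹' A ∩ sphere 0 r) := by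
  rw [← W.symm_symm, ← W.symm.image_eq_preimage_symm, ← W.symm.image_eq_preimage_symm,
    Set.image_image2_distrib_right (g' := W.symm) fun a x => map_smul W.symm a x,
    Set.image_inter W.symm.injective, W.symm.image_sphere, map_zero]

lemma map_val_toSphere_apply [MeasurableSpace V] [BorelSpace V] (μ : Measure V) {A : Set V}
    (hA : MeasurableSet A) :
    μ.toSphere.map Subtype.val A = Module.finrank ℝ V *
      μ (Set.image2 (· • ·) (Set.Ioo (0 : ℝ) 1) (A ∩ sphere (0 : V) 1)) := by
  rw [Measure.map_apply measurable_subtype_coe hA,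
    Measure.toSphere_apply' _ (measurable_subtype_coe hA), Subtype.image_preimage_coe,
    Set.inter_comm, Set.image2_smul]

lemma map_smul_map_val_toSphere {V : Type*} [NormedAddCommGroup V] [InnerProductSpace ℝ V]
    [FiniteDimensional ℝ V] [MeasurableSpace V] [BorelSpace V] (u : OrthGroup V) :
    ((volume : Measure V).toSphere.map Subtype.val).map (u • ·)
      = (volume : Measure V).toSphere.map Subtype.val := by
  let W : V ≃ₗᵢ[ℝ] V := Unitary.linearIsometryEquiv u
  ext A hA
  rw [Measure.map_apply (by fun_prop) hA]
  change (volume : Measure V).toSphere.map Subtype.val (W ⁻¹' A) = _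
  rw [map_val_toSphere_apply _ hA, map_val_toSphere_apply _ (W.continuous.measurable hA),
    ← preimage_image2_smul_inter_sphere,
    W.measurePreserving.measure_preimage_emb W.toHomeomorph.measurableEmbedding]

lemma isUniformOnSphere_sphMeasure (hn : 0 < n) : IsUniformOnSphere (sphMeasure n) where
  isProbabilityMeasure := by
    have : Nonempty (Fin n) := ⟨⟨0, hn⟩⟩
    have : NeZero ((volume : Measure (E n)).toSphere.map Subtype.val) :=
      ⟨(Measure.map_ne_zero_iff measurable_subtype_coe.aemeasurable).mpr
        (Measure.toSphere_ne_zero _)⟩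
    exact isProbabilityMeasureSMul
  ae_norm_eq_one := by
    refine Measure.ae_smul_measure ?_ _
    rw [ae_map_iff measurable_subtype_coe.aemeasurable
      (measurableSet_eq_fun (by fun_prop) (by fun_prop))]
    exact .of_forall fun x => by simp
  map_smul_eq u := by
    rw [sphMeasure, Measure.map_smul, map_smul_map_val_toSphere]

end SphereMeasure

section Constants

variable {d : ℝ}

lemma pi_sq_div_eight_mul_div_le (hd : 2 ≤ d) :
    Real.pi ^ 2 / 8 * (1 + d / (d - 1) ^ 2) / (d - 1) ≤ (1 + (1 + 1 / √(d - 1)) ^ 2) / (d - 1) := by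
  obtain ⟨t, rfl⟩ : ∃ t, d = t + 1 := ⟨d - 1, by ring⟩
  have ht : 1 ≤ t := by linarith
  rw [add_sub_cancel_right]
  set r := 1 / √t with hr
  have hr0 : 0 ≤ r := by positivity
  have hr_sq : r ^ 2 = 1 / t := by rw [hr, div_pow, Real.sq_sqrt (by positivity), one_pow]
  have hr1 : r ^ 2 ≤ 1 := hr_sq ▸ div_le_one_of_le₀ ht (by positivity)
  have h_pi : Real.pi ^ 2 / 8 ≤ 5 / 4 := by nlinarith [Real.pi_lt_d2, Real.pi_pos]
  gcongr
  calc Real.pi ^ 2 / 8 * (1 + (t + 1) / t ^ 2)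
      = Real.pi ^ 2 / 8 * (1 + (r ^ 2 + r ^ 2 * r ^ 2)) := by rw [hr_sq]; field_simp
    _ ≤ 5 / 4 * (1 + (r ^ 2 + r ^ 2 * 1)) := by gcongr
    _ ≤ 1 + (1 + r) ^ 2 := by nlinarith

lemma one_add_one_add_one_div_sqrt_sq_div_le (hd : 2 ≤ d) :
    (1 + (1 + 1 / √(d - 1)) ^ 2) / (d - 1) ≤ 5 / (d - 1) := by
  have ht : 1 ≤ d - 1 := by linarith
  have h_le : 1 / √(d - 1) ≤ 1 := div_le_one_of_le₀ (Real.one_le_sqrt.mpr ht) (Real.sqrt_nonneg _)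
  gcongr
  calc 1 + (1 + 1 / √(d - 1)) ^ 2 ≤ 1 + (1 + 1) ^ 2 := by gcongr
    _ = 5 := by norm_num

end Constants

theorem gradient_int_le_euclidean_hess_int_general {V ι : Type*} [NormedAddCommGroup V]
    [InnerProductSpace ℝ V] [FiniteDimensional ℝ V] [MeasurableSpace V] [BorelSpace V] [Fintype ι]
    (hV : 2 ≤ Module.finrank ℝ V) {σ : Measure V} (hσ : IsUniformOnSphere σ) {f : V → ℝ}
    (hf : ∀ x ∈ sphere (0 : V) 1, ContDiffAt ℝ 2 f x)
    (h_orth : ∀ v : V, ∫ θ, ⟪v, θ⟫ * f θ ∂σ = 0) (b : OrthonormalBasis ι ℝ V) :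
    ∫ θ, ‖gradient f θ‖ ^ 2 ∂σ
      ≤ Real.pi ^ 2 / 8 * (1 + Module.finrank ℝ V / ((Module.finrank ℝ V : ℝ) - 1) ^ 2)
        / ((Module.finrank ℝ V : ℝ) - 1)
        * ∫ θ, ∑ i, ‖fderiv ℝ (gradient f) θ (b i)‖ ^ 2 ∂σ := by
  have : Nontrivial V := Module.nontrivial_of_finrank_pos (R := ℝ) (by lia)
  obtain ⟨e, he⟩ := exists_norm_eq V zero_le_one
  have hf_cont : ContinuousOn f (sphere 0 1) := fun x hx =>
    (hf x hx).continuousAt.continuousWithinAt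
  have hG : ContinuousOn (gradient f) (sphere 0 1) :=
    continuousOn_gradient_of_contDiffAt fun x hx => (hf x hx).of_le one_le_two
  have hH : ContinuousOn (fderiv ℝ (gradient f)) (sphere 0 1) :=
    continuousOn_fderiv_of_contDiffAt fun x hx =>
      contDiffAt_gradient (by simpa [one_add_one_eq_two] using hf x hx)
  have hG_sq : ContinuousOn (fun θ => ‖gradient f θ‖ ^ 2) (sphere 0 1) := hG.norm.pow 2
  have hH_sq : ContinuousOn (fun θ => ∑ i, ‖fderiv ℝ (gradient f) θ (b i)‖ ^ 2) (sphere 0 1) :=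
    continuousOn_finsetSum _ fun i _ => (hH.clm_apply continuousOn_const).norm.pow 2
  simp_rw [fun v : V => hσ.integral_eq_integral_orthHaar he (φ := fun θ => ⟪v, θ⟫ * f θ)
    (ContinuousOn.mul (by fun_prop) hf_cont)] at h_orth
  rw [hσ.integral_eq_integral_orthHaar he hG_sq, hσ.integral_eq_integral_orthHaar he hH_sq]
  exact integral_orth_norm_gradient_sq_le hV hf he h_orth b

/-- **Proposition 6.1 (Statement 16).** Bound on the L²-norm of the Euclidean gradient. -/
theorem gradient_int_le_euclidean_hess_int
    {n : ℕ} (hn : 2 ≤ n) (f : E n → ℝ) (U : Set (E n)) (hU : IsOpen U)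
    (hUS : Metric.sphere (0 : E n) 1 ⊆ U) (hf : ContDiffOn ℝ 2 f U)
    (hlin : ∀ v : E n, ∫ θ, ⟪v, θ⟫ * f θ ∂sphMeasure n = 0) :
    (∫ θ, ‖gradient f θ‖ ^ 2 ∂sphMeasure n ≤
      ((1 + (1 + 1 / Real.sqrt ((n : ℝ) - 1)) ^ 2) / ((n : ℝ) - 1)) *
        ∫ θ, hsNormSq (hess f θ) ∂sphMeasure n) ∧
    (∫ θ, ‖gradient f θ‖ ^ 2 ∂sphMeasure n ≤
      (5 / ((n : ℝ) - 1)) * ∫ θ, hsNormSq (hess f θ) ∂sphMeasure n) := by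
  have hd : (2 : ℝ) ≤ n := by exact_mod_cast hn
  have h_hess : 0 ≤ ∫ θ, hsNormSq (hess f θ) ∂sphMeasure n :=
    integral_nonneg fun _ => Finset.sum_nonneg fun _ _ => sq_nonneg _
  have h_sharp := gradient_int_le_euclidean_hess_int_general (by simpa using hn)
    (isUniformOnSphere_sphMeasure (by lia)) (fun x hx => hf.contDiffAt (hU.mem_nhds (hUS hx))) hlin
    (EuclideanSpace.basisFun (Fin n) ℝ)
  simp only [finrank_euclideanSpace, Fintype.card_fin, EuclideanSpace.basisFun_apply] at h_sharp
  have h_bound := h_sharp.trans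
    (mul_le_mul_of_nonneg_right (pi_sq_div_eight_mul_div_le hd) h_hess)
  exact ⟨h_bound, h_bound.trans
    (mul_le_mul_of_nonneg_right (one_add_one_add_one_div_sqrt_sq_div_le hd) h_hess)⟩

end SecondOrderConc
end
end

section
/- Let f be C¹-smooth on an open neighbourhood of S^{n-1} (with n ≥ 2). Then the vector identity ∫ f(θ) θ dσ_{n-1}(θ) = (1/(n−1)) ∫ ∇_S f(θ) dσ_{n-1}(θ) holds. In particular, the restriction of f to S^{n-1} is orthogonal to all linear functions if and only if ∫ ⟨∇_S f(θ), v⟩ dσ_{n-1}(θ) = 0 for every v ∈ ℝ^n. -/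
open MeasureTheory Metric Filter
open scoped RealInnerProductSpace ENNReal NNReal

noncomputable section

namespace SecondOrderConc

variable {n : ℕ}

/-!
If `A` is skew-adjoint, then `exp (t A)` is a flow of isometries, and differentiating
`∫ g (exp (t A) x) dμ = ∫ g dμ` at `t = 0` shows that the derivative of `g` along the field `A x`
has mean zero for every rotation-invariant `μ`. For `g x = f x • x` this is the integration by
parts `A (∫ f x • x) = -∫ ⟪∇f x, A x⟫ • x`. Taking for `A` the rotation in the plane spanned by `v`
and a basis vector `eᵢ`, pairing with `eᵢ` and summing over `i` turns the left side into
`(n - 1) ⟪v, ∫ f x • x⟫` and the right side into `⟪v, ∫ (‖x‖² • ∇f x - ⟪∇f x, x⟫ • x)⟫`.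
-/

section Integrability

variable {X F : Type*} [MeasurableSpace X] {μ : Measure X} [NormedAddCommGroup F] {g : X → F}

theorem integrable_of_continuousOn_of_ae_mem [TopologicalSpace X] [T2Space X]
    [OpensMeasurableSpace X] [IsFiniteMeasureOnCompacts μ] {K : Set X} (hK : IsCompact K)
    (hμK : ∀ᵐ x ∂μ, x ∈ K) (hg : ContinuousOn g K) : Integrable g μ := by
  rw [← Measure.restrict_eq_self_of_ae_mem hμK]
  exact hg.integrableOn_compact hK

theorem forall_integral_inner_eq_zero_iff [InnerProductSpace ℝ F] [CompleteSpace F]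
    (hg : Integrable g μ) : (∀ v : F, ∫ x, ⟪v, g x⟫ ∂μ = 0) ↔ ∫ x, g x ∂μ = 0 := by
  simp only [integral_inner hg]
  exact ⟨fun h => inner_self_eq_zero.mp (h _), fun h v => by rw [h, inner_zero_right]⟩

end Integrability

open scoped Pointwise in
theorem preimage_set_smul {𝕜 W W' : Type*} [Semiring 𝕜] [AddCommMonoid W] [AddCommMonoid W']
    [Module 𝕜 W] [Module 𝕜 W'] (e : W ≃ₗ[𝕜] W') (T : Set 𝕜) (s : Set W') :
    e ⁻¹' (T • s) = T • (e ⁻¹' s) := by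
  rw [← e.symm_symm, ← e.symm.image_eq_preimage_symm, ← e.symm.image_eq_preimage_symm]
  exact Set.image_image2_distrib_right (map_smul e.symm)

theorem continuousOn_gradient_of_isOpen {𝕜 W : Type*} [RCLike 𝕜] [NormedAddCommGroup W]
    [InnerProductSpace 𝕜 W] [CompleteSpace W] {f : W → 𝕜} {U : Set W} {k : WithTop ℕ∞}
    (hf : ContDiffOn 𝕜 k f U) (hU : IsOpen U) (hk : 1 ≤ k) : ContinuousOn (gradient f) U :=
  (InnerProductSpace.toDual 𝕜 W).symm.continuous.comp_continuousOn
    (hf.continuousOn_fderiv_of_isOpen hU hk)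

variable {V : Type*} [NormedAddCommGroup V] [InnerProductSpace ℝ V]

section RotationInvariant

variable [MeasurableSpace V] {μ : Measure V}

/-- Invariance of a measure on an inner product space under the whole orthogonal group,
reflections included. -/
def IsRotationInvariant (μ : Measure V) : Prop :=
  ∀ R : V ≃ₗᵢ[ℝ] V, MeasurePreserving R μ μ

theorem IsRotationInvariant.smul_measure (hμ : IsRotationInvariant μ) (c : ℝ≥0∞) :
    IsRotationInvariant (c • μ) :=
  fun R => (hμ R).smul_measure c

variable [BorelSpace V]

theorem isRotationInvariant_volume [FiniteDimensional ℝ V] :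
    IsRotationInvariant (volume : Measure V) :=
  fun R => R.measurePreserving

open scoped Pointwise in
theorem IsRotationInvariant.map_val_toSphere (hμ : IsRotationInvariant μ) :
    IsRotationInvariant (μ.toSphere.map Subtype.val) := by
  refine fun R => ⟨R.continuous.measurable, Measure.ext fun s hs => ?_⟩
  have hRs : MeasurableSet (R ⁻¹' s) := R.continuous.measurable hs
  have preimage_cone : R ⁻¹' (Set.Ioo (0 : ℝ) 1 • (sphere 0 1 ∩ s)) =
      Set.Ioo (0 : ℝ) 1 • (sphere 0 1 ∩ R ⁻¹' s) := by
    rw [← R.coe_toLinearEquiv, preimage_set_smul, R.coe_toLinearEquiv, Set.preimage_inter,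
      R.preimage_sphere, map_zero]
  rw [Measure.map_apply R.continuous.measurable hs, Measure.map_apply measurable_subtype_coe hRs,
    Measure.map_apply measurable_subtype_coe hs,
    Measure.toSphere_apply' _ (measurable_subtype_coe hRs),
    Measure.toSphere_apply' _ (measurable_subtype_coe hs),
    Subtype.image_preimage_coe, Subtype.image_preimage_coe, ← preimage_cone,
    (hμ R).measure_preimage_emb R.toHomeomorph.measurableEmbedding]

end RotationInvariant

section SkewAdjoint

/-- The infinitesimal rotation in the plane spanned by `u` and `v`, turning `u` towards `v`. -/
def planeRotation (u v : V) : V →L[ℝ] V :=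
  InnerProductSpace.rankOne ℝ v u - InnerProductSpace.rankOne ℝ u v

theorem planeRotation_apply (u v x : V) : planeRotation u v x = ⟪u, x⟫ • v - ⟪v, x⟫ • u := rfl

theorem planeRotation_mem_skewAdjoint [CompleteSpace V] (u v : V) :
    planeRotation u v ∈ skewAdjoint (V →L[ℝ] V) := by
  rw [skewAdjoint.mem_iff, planeRotation, ContinuousLinearMap.star_eq_adjoint, map_sub,
    InnerProductSpace.adjoint_rankOne, InnerProductSpace.adjoint_rankOne, neg_sub]

section OrthonormalBasis

variable {ι : Type*} [Fintype ι] (b : OrthonormalBasis ι ℝ V) (v x : V)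

theorem sum_inner_planeRotation :
    ∑ i, ⟪b i, planeRotation v (b i) x⟫ = ((Fintype.card ι : ℝ) - 1) * ⟪v, x⟫ := by
  have hterm (i : ι) :
      ⟪b i, planeRotation v (b i) x⟫ = ⟪v, x⟫ - ⟪v, b i⟫ * ⟪b i, x⟫ := by
    rw [planeRotation_apply, inner_sub_right, real_inner_smul_right, real_inner_smul_right,
      real_inner_self_eq_norm_sq, b.norm_eq_one, real_inner_comm v (b i)]
    ring
  simp only [hterm, Finset.sum_sub_distrib, b.sum_inner_mul_inner, Finset.sum_const,
    Finset.card_univ, nsmul_eq_mul, sub_one_mul]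

theorem sum_inner_smul_planeRotation :
    ∑ i, ⟪b i, x⟫ • planeRotation v (b i) x = ⟪v, x⟫ • x - ‖x‖ ^ 2 • v := by
  have hterm (i : ι) : ⟪b i, x⟫ • planeRotation v (b i) x =
      ⟪v, x⟫ • ⟪b i, x⟫ • b i - (⟪x, b i⟫ * ⟪b i, x⟫) • v := by
    rw [planeRotation_apply, smul_sub, smul_comm, smul_smul ⟪b i, x⟫ ⟪b i, x⟫,
      real_inner_comm x (b i)]
  simp only [hterm, Finset.sum_sub_distrib, ← Finset.smul_sum, ← Finset.sum_smul,
    b.sum_repr', b.sum_inner_mul_inner, real_inner_self_eq_norm_sq]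

end OrthonormalBasis

variable [CompleteSpace V]

/-- The one-parameter group `t ↦ exp (t A)` of isometries generated by a skew-adjoint operator,
i.e. the flow of the linear vector field `A`. -/
def expIsometry (A : skewAdjoint (V →L[ℝ] V)) (t : ℝ) : V ≃ₗᵢ[ℝ] V :=
  Unitary.linearIsometryEquiv ⟨NormedSpace.exp (t • (A : V →L[ℝ] V)),
    let : NormedAlgebra ℚ (V →L[ℝ] V) := .restrictScalars ℚ ℝ _
    NormedSpace.exp_mem_unitary_of_mem_skewAdjoint (skewAdjoint.smul_mem t A.2)⟩

variable (A : skewAdjoint (V →L[ℝ] V))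

theorem expIsometry_apply (t : ℝ) (x : V) :
    expIsometry A t x = NormedSpace.exp (t • (A : V →L[ℝ] V)) x := rfl

theorem expIsometry_zero_apply (x : V) : expIsometry A 0 x = x := by
  rw [expIsometry_apply, zero_smul, NormedSpace.exp_zero, one_apply_eq_self]

theorem hasDerivAt_expIsometry_apply (t : ℝ) (x : V) :
    HasDerivAt (fun s => expIsometry A s x) ((A : V →L[ℝ] V) (expIsometry A t x)) t := by
  simpa only [map_zero, add_zero] using!
    (hasDerivAt_exp_smul_const' (𝕂 := ℝ) (A : V →L[ℝ] V) t).clm_apply (hasDerivAt_const t x)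

end SkewAdjoint

section IntegrationByParts

variable [FiniteDimensional ℝ V] [MeasurableSpace V] [BorelSpace V] {μ : Measure V}
  [IsFiniteMeasure μ] {r : ℝ}

theorem integral_fderiv_apply_skewAdjoint_eq_zero {F : Type*} [NormedAddCommGroup F]
    [NormedSpace ℝ F] {g : V → F} {g' : V → V →L[ℝ] F} (hμ : IsRotationInvariant μ)
    (hμr : ∀ᵐ x ∂μ, x ∈ sphere 0 r) (hg : ∀ x ∈ sphere 0 r, HasFDerivAt g (g' x) x)
    (hg' : ContinuousOn g' (sphere 0 r)) (A : skewAdjoint (V →L[ℝ] V)) :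
    ∫ x, g' x ((A : V →L[ℝ] V) x) ∂μ = 0 := by
  have hK : IsCompact (sphere (0 : V) r) := isCompact_sphere 0 r
  have hmem (t : ℝ) {x : V} (hx : x ∈ sphere 0 r) : expIsometry A t x ∈ sphere 0 r := by
    simpa only [mem_sphere_zero_iff_norm, LinearIsometryEquiv.norm_map] using hx
  have hgc : ContinuousOn g (sphere 0 r) := fun x hx => (hg x hx).continuousAt.continuousWithinAt
  have hgA : ContinuousOn (fun x => g' x ((A : V →L[ℝ] V) x)) (sphere 0 r) :=
    hg'.clm_apply (A : V →L[ℝ] V).continuous.continuousOn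
  obtain ⟨C, hC⟩ := hK.exists_bound_of_continuousOn hgA
  have hderiv : HasDerivAt (fun t => ∫ x, g (expIsometry A t x) ∂μ)
      (∫ x, g' (expIsometry A 0 x) ((A : V →L[ℝ] V) (expIsometry A 0 x)) ∂μ) 0 := by
    refine (hasDerivAt_integral_of_dominated_loc_of_deriv_le
      (F := fun t x => g (expIsometry A t x))
      (F' := fun t x => g' (expIsometry A t x) ((A : V →L[ℝ] V) (expIsometry A t x)))
      (bound := fun _ => C) univ_mem (.of_forall fun t => ?_) ?_ ?_
      (hμr.mono fun x hx t _ => hC _ (hmem t hx)) (integrable_const C)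
      (hμr.mono fun x hx t _ => (hg _ (hmem t hx)).comp_hasDerivAt t
        (hasDerivAt_expIsometry_apply A t x))).2
    · exact (integrable_of_continuousOn_of_ae_mem hK hμr (hgc.comp
        (expIsometry A t).continuous.continuousOn fun x hx => hmem t hx)).aestronglyMeasurable
    · simpa only [expIsometry_zero_apply] using integrable_of_continuousOn_of_ae_mem hK hμr hgc
    · simpa only [expIsometry_zero_apply] using
        (integrable_of_continuousOn_of_ae_mem hK hμr hgA).aestronglyMeasurable
  have hconst (t : ℝ) : ∫ x, g (expIsometry A t x) ∂μ = ∫ x, g x ∂μ :=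
    (hμ _).integral_comp (expIsometry A t).toHomeomorph.measurableEmbedding g
  simp only [expIsometry_zero_apply, hconst] at hderiv
  exact hderiv.unique (hasDerivAt_const _ _)

variable {f : V → ℝ} {f' : V → V}

theorem skewAdjoint_apply_integral_smul (hμ : IsRotationInvariant μ)
    (hμr : ∀ᵐ x ∂μ, x ∈ sphere 0 r) (hf : ∀ x ∈ sphere 0 r, HasGradientAt f (f' x) x)
    (hf' : ContinuousOn f' (sphere 0 r)) (A : skewAdjoint (V →L[ℝ] V)) :
    (A : V →L[ℝ] V) (∫ x, f x • x ∂μ) = -∫ x, ⟪f' x, (A : V →L[ℝ] V) x⟫ • x ∂μ := by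
  have hK : IsCompact (sphere (0 : V) r) := isCompact_sphere 0 r
  have hfc : ContinuousOn f (sphere 0 r) := HasGradientAt.continuousOn hf
  have hderiv (x : V) (hx : x ∈ sphere 0 r) : HasFDerivAt (fun y => f y • y)
      (f x • ContinuousLinearMap.id ℝ V + InnerProductSpace.rankOne ℝ x (f' x)) x :=
    (hf x hx).hasFDerivAt.smul (hasFDerivAt_id x)
  have hderivc : ContinuousOn (fun x => f x • ContinuousLinearMap.id ℝ V +
      InnerProductSpace.rankOne ℝ x (f' x)) (sphere 0 r) := by
    refine continuousOn_clm_apply.mpr fun y => ?_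
    simp only [_root_.add_apply, _root_.smul_apply, InnerProductSpace.rankOne_apply]
    fun_prop
  have hzero := integral_fderiv_apply_skewAdjoint_eq_zero hμ hμr hderiv hderivc A
  rw [eq_neg_iff_add_eq_zero, ← ContinuousLinearMap.integral_comp_comm, ← integral_add]
  · simpa using hzero
  all_goals exact integrable_of_continuousOn_of_ae_mem hK hμr (by fun_prop)

/-- On the sphere of radius `r` the integrand on the right is `r ^ 2` times the tangential component
of the gradient. -/
theorem finrank_sub_one_smul_integral_smul (hμ : IsRotationInvariant μ)
    (hμr : ∀ᵐ x ∂μ, x ∈ sphere 0 r) (hf : ∀ x ∈ sphere 0 r, HasGradientAt f (f' x) x)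
    (hf' : ContinuousOn f' (sphere 0 r)) :
    ((Module.finrank ℝ V : ℝ) - 1) • ∫ x, f x • x ∂μ =
      ∫ x, (r ^ 2 • f' x - ⟪f' x, x⟫ • x) ∂μ := by
  have hK : IsCompact (sphere (0 : V) r) := isCompact_sphere 0 r
  let b := stdOrthonormalBasis ℝ V
  refine ext_inner_left ℝ fun v => ?_
  let A (i : Fin (Module.finrank ℝ V)) : skewAdjoint (V →L[ℝ] V) :=
    ⟨planeRotation v (b i), planeRotation_mem_skewAdjoint v (b i)⟩
  calc ⟪v, ((Module.finrank ℝ V : ℝ) - 1) • ∫ x, f x • x ∂μ⟫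
      = ∑ i, ⟪b i, planeRotation v (b i) (∫ x, f x • x ∂μ)⟫ := by
        rw [sum_inner_planeRotation, Fintype.card_fin, real_inner_smul_right]
    _ = ∑ i, -∫ x, ⟪b i, ⟪f' x, planeRotation v (b i) x⟫ • x⟫ ∂μ := by
        refine Finset.sum_congr rfl fun i _ => ?_
        rw [skewAdjoint_apply_integral_smul hμ hμr hf hf' (A i), inner_neg_right,
          ← integral_inner]
        exact integrable_of_continuousOn_of_ae_mem hK hμr (by fun_prop)
    _ = ∫ x, -⟪f' x, ∑ i, ⟪b i, x⟫ • planeRotation v (b i) x⟫ ∂μ := by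
        simp only [inner_sum, real_inner_smul_right]
        rw [integral_neg, Finset.sum_neg_distrib, integral_finsetSum]
        · simp only [mul_comm]
        · exact fun i _ => integrable_of_continuousOn_of_ae_mem hK hμr (by fun_prop)
    _ = ∫ x, ⟪v, r ^ 2 • f' x - ⟪f' x, x⟫ • x⟫ ∂μ := by
        refine integral_congr_ae (hμr.mono fun x hx => ?_)
        simp only [sum_inner_smul_planeRotation, mem_sphere_zero_iff_norm.mp hx, inner_sub_right,
          real_inner_smul_right, real_inner_comm v (f' x)]
        ring
    _ = ⟪v, ∫ x, (r ^ 2 • f' x - ⟪f' x, x⟫ • x) ∂μ⟫ :=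
        integral_inner (integrable_of_continuousOn_of_ae_mem hK hμr (by fun_prop)) v

theorem integral_smul_eq_integral_sgrad_general (hV : 2 ≤ Module.finrank ℝ V)
    (hμ : IsRotationInvariant μ) (hμr : ∀ᵐ x ∂μ, x ∈ sphere 0 r)
    (hf : ∀ x ∈ sphere 0 r, HasGradientAt f (f' x) x) (hf' : ContinuousOn f' (sphere 0 r)) :
    (∫ x, f x • x ∂μ = ((Module.finrank ℝ V : ℝ) - 1)⁻¹ •
      ∫ x, (r ^ 2 • f' x - ⟪f' x, x⟫ • x) ∂μ) ∧
    ((∀ v : V, ∫ x, ⟪v, x⟫ * f x ∂μ = 0) ↔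
      ∀ v : V, ∫ x, ⟪r ^ 2 • f' x - ⟪f' x, x⟫ • x, v⟫ ∂μ = 0) := by
  have hV' : (Module.finrank ℝ V : ℝ) - 1 ≠ 0 :=
    sub_ne_zero.mpr (by exact_mod_cast (show Module.finrank ℝ V ≠ 1 by lia))
  have hfc : ContinuousOn f (sphere 0 r) := HasGradientAt.continuousOn hf
  have hint {g : V → V} (hg : ContinuousOn g (sphere 0 r)) : Integrable g μ :=
    integrable_of_continuousOn_of_ae_mem (isCompact_sphere 0 r) hμr hg
  have hident := finrank_sub_one_smul_integral_smul hμ hμr hf hf'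
  refine ⟨(eq_inv_smul_iff₀ hV').mpr hident, ?_⟩
  calc (∀ v : V, ∫ x, ⟪v, x⟫ * f x ∂μ = 0)
      ↔ ∫ x, f x • x ∂μ = 0 := by
        rw [← forall_integral_inner_eq_zero_iff (hint (by fun_prop))]
        simp only [real_inner_smul_right, mul_comm]
    _ ↔ ∫ x, (r ^ 2 • f' x - ⟪f' x, x⟫ • x) ∂μ = 0 := by
        rw [← hident, smul_eq_zero_iff_right hV']
    _ ↔ ∀ v : V, ∫ x, ⟪r ^ 2 • f' x - ⟪f' x, x⟫ • x, v⟫ ∂μ = 0 := by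
        rw [← forall_integral_inner_eq_zero_iff (hint (by fun_prop))]
        simp only [real_inner_comm]

end IntegrationByParts

theorem isRotationInvariant_sphMeasure : IsRotationInvariant (sphMeasure n) :=
  isRotationInvariant_volume.map_val_toSphere.smul_measure _

theorem ae_mem_sphere_sphMeasure : ∀ᵐ θ ∂sphMeasure n, θ ∈ sphere (0 : E n) 1 :=
  Measure.ae_smul_measure ((ae_map_iff measurable_subtype_coe.aemeasurable
    isClosed_sphere.measurableSet).mpr (ae_of_all _ Subtype.prop)) _

instance isFiniteMeasure_sphMeasure : IsFiniteMeasure (sphMeasure n) :=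
  ⟨(ENNReal.inv_mul_le_one _).trans_lt ENNReal.one_lt_top⟩

/-- **Proposition 14.1 (Statement 18).** Vector identity relating `∫ fθ dσ` to the
mean of the spherical gradient, and the resulting characterization of orthogonality
to linear functions. -/
theorem integral_smul_eq_integral_sgrad
    {n : ℕ} (hn : 2 ≤ n) (f : E n → ℝ) (U : Set (E n)) (hU : IsOpen U)
    (hUS : Metric.sphere (0 : E n) 1 ⊆ U) (hf : ContDiffOn ℝ 1 f U) :
    (∫ θ, f θ • θ ∂sphMeasure n = (((n : ℝ) - 1))⁻¹ • ∫ θ, sgrad f θ ∂sphMeasure n) ∧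
    ((∀ v : E n, ∫ θ, ⟪v, θ⟫ * f θ ∂sphMeasure n = 0) ↔
      (∀ v : E n, ∫ θ, ⟪sgrad f θ, v⟫ ∂sphMeasure n = 0)) := by
  simpa only [sgrad, one_pow, one_smul, finrank_euclideanSpace_fin] using
    integral_smul_eq_integral_sgrad_general (hn.trans_eq finrank_euclideanSpace_fin.symm)
      isRotationInvariant_sphMeasure ae_mem_sphere_sphMeasure
      (fun _ hθ => (hf.differentiableOn one_ne_zero).hasGradientAt (hU.mem_nhds (hUS hθ)))
      ((continuousOn_gradient_of_isOpen hf hU le_rfl).mono hUS)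

end SecondOrderConc
end
end
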